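/- arXiv:1603.06750 — 9 statements merged into one kernel-verified Lean document; each statement's English description precedes it below -/
import Mathlib

section
/- Let H be a real Hilbert space, let J be a countable index set, let (V_k)_{k∈J} be a family of closed subspaces of H, and for each k let Q_k : H → H be the orthogonal projection onto the orthogonal complement V_k^⊥. Set V := ⋂_{k∈J} V_k and let P : H → H be the orthogonal projection onto V. Assume that for every x ∈ H the series S x := ∑_{k∈J} Q_k x converges in H and that S defines a bounded linear operator on H. Then for every real γ with 0 < γ < 2/‖S‖ and every x ∈ H, the sequence (I − γ S)^M x converges to P x in H as M → ∞. -/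
open Filter
open scoped RealInnerProductSpace

/-- **Method of reflections, pointwise convergence (Proposition on abstract projections).**
Let `H` be a real Hilbert space, `(V k)` a countable family of closed subspaces,
`Q k` the orthogonal projection onto `(V k)ᗮ`, `P` the orthogonal projection onto
`V := ⨅ k, V k`.  If `S x = ∑ k, Q k x` converges for every `x` and defines a bounded
operator, then for every `0 < γ < 2 / ‖S‖`, `(I - γ S)^M x → P x`. -/
theorem method_of_reflections_pointwise
    {H : Type*} [NormedAddCommGroup H] [InnerProductSpace ℝ H] [CompleteSpace H]
    {J : Type*} [Countable J] (V : J → Submodule ℝ H)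
    (hVclosed : ∀ k, IsClosed ((V k : Set H)))
    (Q : J → H →L[ℝ] H)
    (hQ : ∀ k (x : H), Q k x ∈ (V k)ᗮ ∧ x - Q k x ∈ V k)
    (P : H →L[ℝ] H)
    (hP : ∀ x : H, P x ∈ (⨅ k, V k) ∧ x - P x ∈ (⨅ k, V k)ᗮ)
    (S : H →L[ℝ] H)
    (hS : ∀ x : H, HasSum (fun k => Q k x) (S x))
    (γ : ℝ) (hγ0 : 0 < γ) (hγ2 : γ < 2 / ‖S‖) (x : H) :
    Tendsto (fun M : ℕ => ((1 - γ • S) ^ M) x) atTop (nhds (P x)) := by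
  have hSpos : 0 < ‖S‖ := by
    rcases (norm_nonneg S).eq_or_lt with h | h
    · rw [← h, div_zero] at hγ2; linarith
    · exact h
  have hQin : ∀ k (y z : H), ⟪Q k y, z⟫ = ⟪Q k y, Q k z⟫ := by
    intro k y z
    have h := Submodule.inner_left_of_mem_orthogonal (hQ k z).2 (hQ k y).1
    rw [inner_sub_right] at h
    linarith
  have hin : ∀ y z : H, HasSum (fun k => ⟪Q k y, Q k z⟫) ⟪S y, z⟫ := by
    intro y z
    have h := (hS y).mapL ((innerSL ℝ) z)
    simp only [innerSL_apply_apply] at h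
    rw [real_inner_comm]
    refine h.congr_fun ?_ |> id
    intro k
    rw [← hQin, real_inner_comm]
  have hsym : ∀ y z : H, ⟪S y, z⟫ = ⟪S z, y⟫ := by
    intro y z
    refine (hin y z).unique ?_
    simpa only [real_inner_comm] using hin z y
  have hpos : ∀ y : H, 0 ≤ ⟪S y, y⟫ := fun y =>
    (hin y y).nonneg (fun k => real_inner_self_nonneg)
  have hCS : ∀ y : H, ‖S y‖ ^ 2 ≤ ‖S‖ * ⟪S y, y⟫ := by
    intro y
    have h := hpos (y - ‖S‖⁻¹ • S y)
    have h2 : ⟪S (S y), S y⟫ ≤ ‖S‖ * ‖S y‖ ^ 2 := by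
      calc ⟪S (S y), S y⟫ ≤ ‖S (S y)‖ * ‖S y‖ := real_inner_le_norm _ _
        _ ≤ (‖S‖ * ‖S y‖) * ‖S y‖ := by gcongr; exact S.le_opNorm _
        _ = _ := by ring
    have h3 : ⟪S (S y), y⟫ = ‖S y‖ ^ 2 := by
      rw [hsym, real_inner_self_eq_norm_sq]
    simp only [map_sub, map_smul, inner_sub_left, inner_sub_right, inner_smul_left,
      inner_smul_right, h3, real_inner_self_eq_norm_sq, conj_trivial] at h
    have h4 : ‖S‖⁻¹ * (‖S‖⁻¹ * ⟪S (S y), S y⟫) ≤ ‖S‖⁻¹ * ‖S y‖ ^ 2 := by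
      have : ‖S‖⁻¹ * ⟪S (S y), S y⟫ ≤ ‖S y‖ ^ 2 := by
        rw [inv_mul_le_iff₀ hSpos]; exact h2
      gcongr
    have h5 : ‖S‖⁻¹ * ‖S y‖ ^ 2 ≤ ⟪S y, y⟫ := by linarith
    rwa [inv_mul_le_iff₀ hSpos] at h5
  have hγS : 0 < 2 - γ * ‖S‖ := by
    rw [lt_div_iff₀ hSpos] at hγ2; linarith
  set T : H →L[ℝ] H := 1 - γ • S with hT
  have hTa : ∀ y, T y = y - γ • S y := fun y => by simp [hT]
  have hdec : ∀ y, ‖T y‖ ^ 2 ≤ ‖y‖ ^ 2 - γ * (2 - γ * ‖S‖) * ⟪S y, y⟫ := by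
    intro y
    rw [hTa, norm_sub_sq_real, inner_smul_right, norm_smul, mul_pow, Real.norm_eq_abs, sq_abs,
      real_inner_comm]
    have := mul_le_mul_of_nonneg_left (hCS y) (sq_nonneg γ)
    linarith
  have hcpos : 0 < γ * (2 - γ * ‖S‖) := mul_pos hγ0 hγS
  have hT1 : ∀ y, ‖T y‖ ≤ ‖y‖ := by
    intro y
    have h1 := hdec y
    have h2 := mul_nonneg hcpos.le (hpos y)
    exact (sq_le_sq₀ (norm_nonneg _) (norm_nonneg _)).1 (by linarith)
  have hTn : ∀ (n : ℕ) y, ‖(T ^ n) y‖ ≤ ‖y‖ := by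
    intro n
    induction n with
    | zero => intro y; simp
    | succ n ih => intro y; rw [pow_succ']; exact (hT1 _).trans (ih y)
  have hsum : ∀ y, Summable (fun n : ℕ => ⟪S ((T ^ n) y), (T ^ n) y⟫) := by
    intro y
    refine summable_of_sum_range_le (c := (γ * (2 - γ * ‖S‖))⁻¹ * ‖y‖ ^ 2)
      (fun n => hpos _) ?_
    intro n
    rw [le_inv_mul_iff₀ hcpos]
    have : γ * (2 - γ * ‖S‖) * ∑ i ∈ Finset.range n, ⟪S ((T ^ i) y), (T ^ i) y⟫
        ≤ ‖y‖ ^ 2 - ‖(T ^ n) y‖ ^ 2 := by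
      induction n with
      | zero => simp
      | succ n ih =>
        rw [Finset.sum_range_succ, mul_add, pow_succ' T n]
        have := hdec ((T ^ n) y)
        have he : (T * T ^ n) y = T ((T ^ n) y) := rfl
        rw [he]
        linarith
    have h0 := sq_nonneg ‖(T ^ n) y‖
    linarith
  have hST : ∀ y, Tendsto (fun n : ℕ => S ((T ^ n) y)) atTop (nhds 0) := by
    intro y
    have h1 := ((hsum y).tendsto_atTop_zero).const_mul ‖S‖
    rw [mul_zero] at h1
    have h2 : Tendsto (fun n : ℕ => ‖S ((T ^ n) y)‖ ^ 2) atTop (nhds 0) :=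
      squeeze_zero (fun n => sq_nonneg _) (fun n => hCS _) h1
    have h3 := h2.sqrt
    simp only [Real.sqrt_sq (norm_nonneg _), Real.sqrt_zero] at h3
    exact tendsto_zero_iff_norm_tendsto_zero.2 h3
  have hcomm : ∀ (n : ℕ) y, (T ^ n) (S y) = S ((T ^ n) y) := by
    have hc : Commute T S := by
      rw [hT]
      exact (Commute.one_left S).sub_left ((Commute.refl S).smul_left γ)
    intro n y
    exact congrArg (fun A : H →L[ℝ] H => A y) (hc.pow_left n).eq
  have hclos : ∀ w ∈ (LinearMap.range (S : H →ₗ[ℝ] H)).topologicalClosure,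
      Tendsto (fun n : ℕ => (T ^ n) w) atTop (nhds 0) := by
    intro w hw
    rw [Metric.tendsto_atTop]
    intro ε hε
    have hw' : w ∈ closure ((LinearMap.range (S : H →ₗ[ℝ] H) : Submodule ℝ H) : Set H) := hw
    obtain ⟨_, ⟨y, rfl⟩, hy⟩ := Metric.mem_closure_iff.1 hw' (ε / 2) (by linarith)
    obtain ⟨N, hN⟩ := Metric.tendsto_atTop.1 (hST y) (ε / 2) (by linarith)
    refine ⟨N, fun n hn => ?_⟩
    have h1 := hN n hn
    rw [dist_zero_right, ← hcomm] at h1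
    rw [dist_eq_norm] at hy
    rw [dist_zero_right]
    have h2 := hTn n (w - S y)
    have h3 : (T ^ n) w = (T ^ n) (w - S y) + (T ^ n) (S y) := by
      rw [map_sub]; abel
    rw [h3]
    have h4 : ‖w - S y‖ < ε / 2 := hy
    linarith [norm_add_le ((T ^ n) (w - S y)) ((T ^ n) (S y))]
  have hker : (LinearMap.range (S : H →ₗ[ℝ] H))ᗮ ≤ ⨅ k, V k := by
    intro y hy
    have h0 : ⟪S y, y⟫ = 0 := (Submodule.mem_orthogonal _ _).1 hy (S y) ⟨y, rfl⟩
    have h1 := hin y y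
    rw [h0, hasSum_zero_iff_of_nonneg (fun k => real_inner_self_nonneg)] at h1
    rw [Submodule.mem_iInf]
    intro k
    have h2 : Q k y = 0 := inner_self_eq_zero.1 (congrFun h1 k)
    simpa [h2] using (hQ k y).2
  have hSP : S (P x) = 0 := by
    have hz : ∀ k, Q k (P x) = 0 := by
      intro k
      have h1 : P x ∈ V k := (Submodule.mem_iInf _).1 (hP x).1 k
      have h2 := Submodule.inner_left_of_mem_orthogonal h1 (hQ k (P x)).1
      rw [hQin] at h2
      exact inner_self_eq_zero.1 h2
    have h := hS (P x)
    simp only [hz] at h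
    exact h.unique hasSum_zero
  have hTP : ∀ n : ℕ, (T ^ n) (P x) = P x := by
    intro n
    induction n with
    | zero => simp
    | succ n ih => rw [pow_succ', mul_apply_eq_comp, ih, hTa, hSP]; simp
  have hmem : x - P x ∈ (LinearMap.range (S : H →ₗ[ℝ] H)).topologicalClosure := by
    rw [← Submodule.orthogonal_orthogonal_eq_closure]
    exact Submodule.orthogonal_le hker (hP x).2
  have hfin := (hclos _ hmem).add_const (P x)
  simpa only [map_sub, hTP, sub_add_cancel, zero_add] using hfin
end

section
/- Let H be a real Hilbert space, let J be a countable index set, let (V_k)_{k∈J} be a family of closed subspaces of H, and for each k let Q_k : H → H be the orthogonal projection onto V_k^⊥. Set V := ⋂_{k∈J} V_k and let P be the orthogonal projection onto V. Assume that for every x ∈ H the series S x := ∑_{k∈J} Q_k x converges in H, that S defines a bounded linear operator on H, and that there exists c > 0 such that ⟨S x, x⟩ ≥ c ‖x‖² for all x ∈ V^⊥. Then for every real γ with 0 < γ < 2/‖S‖ and every M ∈ ℕ, the operator norm satisfies ‖(I − γ S)^M − P‖ ≤ (max{1 − γ c, γ ‖S‖ − 1})^M. -/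
open Filter
open scoped RealInnerProductSpace

theorem le_of_sq_le_sq_aux {a b : ℝ} (h : a ^ 2 ≤ b ^ 2) (hb : 0 ≤ b) : a ≤ b :=
  by nlinarith

/-- **Method of reflections, exponential convergence in operator norm.**
With `Q k` the orthogonal projection onto `(V k)ᗮ`, `P` the orthogonal projection onto
`V := ⨅ k, V k`, `S x = ∑ k, Q k x` bounded, and `⟨S x, x⟩ ≥ c ‖x‖²` on `Vᗮ`, one has
`‖(I - γS)^M - P‖ ≤ (max (1 - γ c) (γ‖S‖ - 1))^M` for `0 < γ < 2/‖S‖`. -/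
theorem method_of_reflections_opNorm
    {H : Type*} [NormedAddCommGroup H] [InnerProductSpace ℝ H] [CompleteSpace H]
    {J : Type*} [Countable J] (V : J → Submodule ℝ H)
    (hVclosed : ∀ k, IsClosed ((V k : Set H)))
    (Q : J → H →L[ℝ] H)
    (hQ : ∀ k (x : H), Q k x ∈ (V k)ᗮ ∧ x - Q k x ∈ V k)
    (P : H →L[ℝ] H)
    (hP : ∀ x : H, P x ∈ (⨅ k, V k) ∧ x - P x ∈ (⨅ k, V k)ᗮ)
    (S : H →L[ℝ] H)
    (hS : ∀ x : H, HasSum (fun k => Q k x) (S x))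
    (c : ℝ) (hc : 0 < c)
    (hcoer : ∀ x ∈ (⨅ k, V k)ᗮ, c * ‖x‖ ^ 2 ≤ ⟪S x, x⟫)
    (γ : ℝ) (hγ0 : 0 < γ) (hγ2 : γ < 2 / ‖S‖) (M : ℕ) :
    ‖(1 - γ • S) ^ M - P‖ ≤ (max (1 - γ * c) (γ * ‖S‖ - 1)) ^ M := by
  have hQsymm : ∀ k (x y : H), ⟪Q k x, y⟫ = ⟪x, Q k y⟫ := by
    intro k x y
    have h1 : ⟪y - Q k y, Q k x⟫ = 0 := (hQ k x).1 _ (hQ k y).2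
    have h2 : ⟪x - Q k x, Q k y⟫ = 0 := (hQ k y).1 _ (hQ k x).2
    rw [inner_sub_left] at h1 h2
    have h3 := real_inner_comm (Q k x) y
    have h4 := real_inner_comm (Q k x) (Q k y)
    linarith
  have hSsymm : ∀ x y : H, ⟪S x, y⟫ = ⟪x, S y⟫ := by
    intro x y
    have h1 : HasSum (fun k => ⟪y, Q k x⟫) ⟪y, S x⟫ :=
      (hS x).mapL (innerSL ℝ y)
    have h2 : HasSum (fun k => ⟪x, Q k y⟫) ⟪x, S y⟫ :=
      (hS y).mapL (innerSL ℝ x)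
    have h3 : (fun k => ⟪y, Q k x⟫) = fun k => ⟪x, Q k y⟫ := by
      funext k
      rw [← hQsymm, real_inner_comm]
    rw [h3] at h1
    rw [real_inner_comm]
    exact h1.unique h2
  have hSV : ∀ v ∈ (⨅ k, V k), S v = 0 := by
    intro v hv
    have h0 : ∀ k, Q k v = 0 := by
      intro k
      have hvk : v ∈ V k := (Submodule.mem_iInf _).1 hv k
      have h1 : Q k v ∈ V k := by
        have := (V k).sub_mem hvk (hQ k v).2
        simpa using this
      exact inner_self_eq_zero.1 ((hQ k v).1 _ h1)
    have h1 := hS v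
    simp only [h0] at h1
    exact h1.unique hasSum_zero
  set W := (⨅ k, V k) with hW
  set ρ := max (1 - γ * c) (γ * ‖S‖ - 1) with hρ
  have hSpos : 0 < ‖S‖ := by
    rcases (norm_nonneg S).eq_or_lt with h | h
    · rw [← h, div_zero] at hγ2
      linarith
    · exact h
  have hSle : ∀ x : H, ⟪S x, x⟫ ≤ ‖S‖ * ‖x‖ ^ 2 := by
    intro x
    have h1 := real_inner_le_norm (S x) x
    have h2 := mul_le_mul_of_nonneg_right (S.le_opNorm x) (norm_nonneg x)
    nlinarith
  have hcS : c ≤ ‖S‖ := by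
    have hex : ∃ x, S x ≠ 0 := by
      by_contra! h
      have : S = 0 := by
        ext x
        simpa using h x
      rw [this, norm_zero] at hSpos
      exact lt_irrefl _ hSpos
    obtain ⟨x, hx⟩ := hex
    have hu : x - P x ≠ 0 := by
      intro h
      apply hx
      rw [sub_eq_zero.1 h]
      exact hSV _ (hP x).1
    have h1 := (hcoer _ (hP x).2).trans (hSle _)
    have h2 : 0 < ‖x - P x‖ ^ 2 := by positivity
    exact le_of_mul_le_mul_right h1 h2
  have hρ1 : 1 - γ * c ≤ ρ := le_max_left _ _
  have hρ2 : γ * ‖S‖ - 1 ≤ ρ := le_max_right _ _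
  have hρ0 : 0 ≤ ρ := by nlinarith
  set T : H →L[ℝ] H := 1 - γ • S with hT
  have hTapp : ∀ x, T x = x - γ • S x := fun x => by simp [hT]
  have hTW : ∀ v ∈ W, T v = v := by
    intro v hv
    rw [hTapp, hSV v hv]
    simp
  have hTsymm : ∀ x y : H, ⟪T x, y⟫ = ⟪x, T y⟫ := by
    intro x y
    rw [hTapp, hTapp, inner_sub_left, inner_sub_right, inner_smul_left, inner_smul_right, hSsymm]
    simp
  have hTperp : ∀ u ∈ Wᗮ, T u ∈ Wᗮ := by
    intro u hu v hv
    rw [← hTsymm, hTW v hv]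
    exact hu v hv
  have hTquad : ∀ x, ⟪T x, x⟫ = ‖x‖ ^ 2 - γ * ⟪S x, x⟫ := by
    intro x
    rw [hTapp, inner_sub_left, real_inner_smul_left, real_inner_self_eq_norm_sq]
  have hup : ∀ u ∈ Wᗮ, ⟪T u, u⟫ ≤ ρ * ‖u‖ ^ 2 := by
    intro u hu
    rw [hTquad]
    have h1 := mul_le_mul_of_nonneg_left (hcoer u hu) hγ0.le
    have h2 := mul_le_mul_of_nonneg_right hρ1 (sq_nonneg ‖u‖)
    linarith
  have hlow : ∀ u, -(ρ * ‖u‖ ^ 2) ≤ ⟪T u, u⟫ := by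
    intro u
    rw [hTquad]
    have h1 := mul_le_mul_of_nonneg_left (hSle u) hγ0.le
    have h2 := mul_le_mul_of_nonneg_right hρ2 (sq_nonneg ‖u‖)
    linarith
  have hpol : ∀ x ∈ Wᗮ, ∀ y ∈ Wᗮ, 2 * ⟪T x, y⟫ ≤ ρ * (‖x‖ ^ 2 + ‖y‖ ^ 2) := by
    intro x hx y hy
    have h1 := hup _ (Wᗮ.add_mem hx hy)
    have h2 := hlow (x - y)
    have h3 := parallelogram_law_with_norm ℝ x y
    have h4 : ⟪T y, x⟫ = ⟪T x, y⟫ := by rw [hTsymm, real_inner_comm]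
    rw [map_add, inner_add_left, inner_add_right, inner_add_right, h4] at h1
    rw [map_sub, inner_sub_left, inner_sub_right, inner_sub_right, h4] at h2
    have h5 : ρ * (‖x + y‖ ^ 2 + ‖x - y‖ ^ 2) = ρ * (2 * (‖x‖ ^ 2 + ‖y‖ ^ 2)) := by
      congr 1
    linarith
  have hcontr : ∀ u ∈ Wᗮ, ‖T u‖ ≤ ρ * ‖u‖ := by
    intro u hu
    rcases hρ0.eq_or_lt with h | h
    · have h1 := hpol u hu _ (hTperp u hu)
      rw [real_inner_self_eq_norm_sq, ← h] at h1
      have h2 : ‖T u‖ = 0 := by nlinarith [norm_nonneg (T u)]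
      rw [h2, ← h, zero_mul]
    · have h1 := hpol (ρ • u) (Wᗮ.smul_mem _ hu) _ (hTperp u hu)
      rw [map_smul, real_inner_smul_left, real_inner_self_eq_norm_sq, norm_smul,
        Real.norm_of_nonneg hρ0] at h1
      have h2 : ‖T u‖ ^ 2 ≤ (ρ * ‖u‖) ^ 2 := by
        refine le_of_mul_le_mul_left ?_ h
        linarith
      exact le_of_sq_le_sq_aux h2 (by positivity)
  have hpowW : ∀ n : ℕ, ∀ v ∈ W, (T ^ n) v = v := by
    intro n v hv
    induction n with
    | zero => simp
    | succ n ih => rw [pow_succ', mul_apply_eq_comp, ih, hTW v hv]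
  have hpow : ∀ n : ℕ, ∀ u ∈ Wᗮ, (T ^ n) u ∈ Wᗮ ∧ ‖(T ^ n) u‖ ≤ ρ ^ n * ‖u‖ := by
    intro n u hu
    induction n with
    | zero => simpa using hu
    | succ n ih =>
      rw [pow_succ', mul_apply_eq_comp]
      refine ⟨hTperp _ ih.1, (hcontr _ ih.1).trans ?_⟩
      rw [pow_succ', mul_assoc]
      exact mul_le_mul_of_nonneg_left ih.2 hρ0
  refine ContinuousLinearMap.opNorm_le_bound _ (by positivity) fun x => ?_
  have h1 : (T ^ M - P) x = (T ^ M) (x - P x) := by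
    rw [map_sub, hpowW M _ (hP x).1]
    rfl
  rw [h1]
  refine (hpow M _ (hP x).2).2.trans (mul_le_mul_of_nonneg_left ?_ (by positivity))
  have h2 : ⟪P x, x - P x⟫ = 0 := (hP x).2 _ (hP x).1
  have h3 := norm_add_sq_real (P x) (x - P x)
  rw [h2, add_sub_cancel] at h3
  refine le_of_sq_le_sq_aux ?_ (norm_nonneg x)
  nlinarith [sq_nonneg ‖P x‖]
end

section
/- Let H be a real Hilbert space, let J be a countable index set, let (V_k)_{k∈J} be a family of closed subspaces of H, and for each k let Q_k : H → H be the orthogonal projection onto V_k^⊥. Set V := ⋂_{k∈J} V_k and let P be the orthogonal projection onto V. Let (γ_k)_{k∈J} be positive real numbers and assume that for every x ∈ H the series S x := ∑_{k∈J} γ_k Q_k x converges in H, that S defines a bounded linear operator on H, and that ‖S‖ < 2. Then for every x ∈ H, the sequence (I − S)^M x converges to P x in H as M → ∞. -/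
open Filter
open scoped RealInnerProductSpace

/-- **Modified method of reflections with position-dependent weights, convergence.**
With `Q k` the orthogonal projection onto `(V k)ᗮ`, `P` the orthogonal projection onto
`V := ⨅ k, V k`, positive weights `γ k`, and `S x = ∑ k, γ k • Q k x` bounded with
`‖S‖ < 2`, the iterates `(I - S)^M x` converge to `P x` for every `x`. -/
theorem modified_method_of_reflections_pointwise
    {H : Type*} [NormedAddCommGroup H] [InnerProductSpace ℝ H] [CompleteSpace H]
    {J : Type*} [Countable J] (V : J → Submodule ℝ H)
    (hVclosed : ∀ k, IsClosed ((V k : Set H)))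
    (Q : J → H →L[ℝ] H)
    (hQ : ∀ k (x : H), Q k x ∈ (V k)ᗮ ∧ x - Q k x ∈ V k)
    (P : H →L[ℝ] H)
    (hP : ∀ x : H, P x ∈ (⨅ k, V k) ∧ x - P x ∈ (⨅ k, V k)ᗮ)
    (γ : J → ℝ) (hγ : ∀ k, 0 < γ k)
    (S : H →L[ℝ] H)
    (hS : ∀ x : H, HasSum (fun k => γ k • Q k x) (S x))
    (hSnorm : ‖S‖ < 2) (x : H) :
    Tendsto (fun M : ℕ => ((1 - S) ^ M) x) atTop (nhds (P x)) := by
  have hQin : ∀ k (x y : H), ⟪Q k x, y⟫ = ⟪Q k x, Q k y⟫ := by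
    intro k x y
    have h := (Submodule.mem_orthogonal' _ _).1 (hQ k x).1 _ (hQ k y).2
    rw [inner_sub_right] at h
    linarith
  have hSin : ∀ x y : H, HasSum (fun k => γ k * ⟪Q k x, Q k y⟫) ⟪S x, y⟫ := by
    intro x y
    have h := (hS x).mapL (innerSL ℝ y)
    simp only [innerSL_apply_apply, inner_smul_right] at h
    rw [real_inner_comm]
    have he : (fun k => γ k * ⟪Q k x, Q k y⟫) = fun k => γ k * ⟪y, Q k x⟫ := by
      funext k
      rw [← hQin, real_inner_comm]
    rw [he]
    exact h
  have hsym : ∀ x y : H, ⟪S x, y⟫ = ⟪x, S y⟫ := by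
    intro x y
    rw [real_inner_comm (S y) x]
    refine (hSin x y).unique ?_
    convert hSin y x using 3 with k
    rw [real_inner_comm]
  have hterm : ∀ x k, 0 ≤ γ k * ⟪Q k x, Q k x⟫ := fun x k =>
    mul_nonneg (hγ k).le real_inner_self_nonneg
  have hpos : ∀ x : H, 0 ≤ ⟪S x, x⟫ := fun x => (hSin x x).nonneg (hterm x)
  obtain ⟨L, hL0, hL2, hLS⟩ : ∃ L : ℝ, 0 < L ∧ L < 2 ∧ ‖S‖ ≤ L :=
    ⟨(‖S‖ + 2) / 2, by positivity, by linarith, by linarith⟩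
  have hb : ∀ x : H, ‖S x‖ ^ 2 ≤ L * ⟪S x, x⟫ := by
    intro x
    have h1 := hpos (L • x - S x)
    have h2 : ⟪S (S x), S x⟫ ≤ L * ‖S x‖ ^ 2 := by
      have := real_inner_le_norm (S (S x)) (S x)
      have h3 := S.le_of_opNorm_le hLS (S x)
      nlinarith [norm_nonneg (S x)]
    simp only [map_sub, map_smul, inner_sub_left, inner_sub_right, inner_smul_left,
      inner_smul_right, hsym (S x) x, real_inner_self_eq_norm_sq] at h1
    simp at h1
    have : 0 ≤ L * (L * ⟪S x, x⟫ - ‖S x‖ ^ 2) := by nlinarith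
    have := nonneg_of_mul_nonneg_right this hL0
    linarith
  have hT : ∀ y : H, ‖(1 - S) y‖ ^ 2 ≤ ‖y‖ ^ 2 - (2 - L) * ⟪S y, y⟫ := by
    intro y
    have h : (1 - S) y = y - S y := rfl
    rw [h, norm_sub_sq_real, real_inner_comm]
    linarith [hb y]
  have hT1 : ∀ y : H, ‖(1 - S) y‖ ≤ ‖y‖ := by
    intro y
    refine le_of_sq_le_sq ?_ (norm_nonneg _)
    nlinarith [hT y, hpos y]
  have hsucc : ∀ (n : ℕ) (y : H), ((1 - S) ^ (n + 1)) y = (1 - S) (((1 - S) ^ n) y) := by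
    intro n y
    rw [pow_succ']; rfl
  have hTn : ∀ (n : ℕ) (y : H), ‖((1 - S) ^ n) y‖ ≤ ‖y‖ := by
    intro n y
    induction n with
    | zero => simp
    | succ n ih => rw [hsucc]; exact (hT1 _).trans ih
  have hST : ∀ z : H, Tendsto (fun n : ℕ => S (((1 - S) ^ n) z)) atTop (nhds 0) := by
    intro z
    set u : ℕ → ℝ := fun n => ‖((1 - S) ^ n) z‖ ^ 2 with hu
    have hanti : Antitone u := by
      refine antitone_nat_of_succ_le fun n => ?_
      simp only [hu, hsucc]
      exact pow_le_pow_left₀ (norm_nonneg _) (hT1 _) 2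
    have hlim := tendsto_atTop_ciInf hanti ⟨0, by rintro _ ⟨n, rfl⟩; positivity⟩
    have hd : Tendsto (fun n => L / (2 - L) * (u n - u (n + 1))) atTop (nhds 0) := by
      simpa using (hlim.sub (hlim.comp (tendsto_add_atTop_nat 1))).const_mul (L / (2 - L))
    have hsq : Tendsto (fun n : ℕ => ‖S (((1 - S) ^ n) z)‖ ^ 2) atTop (nhds 0) := by
      refine squeeze_zero (fun n => by positivity) (fun n => ?_) hd
      refine (hb _).trans ?_
      have h1 := hT (((1 - S) ^ n) z)
      rw [← hsucc] at h1
      have h2 : (0 : ℝ) < 2 - L := by linarith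
      rw [div_mul_eq_mul_div, le_div_iff₀ h2, mul_assoc]
      refine mul_le_mul_of_nonneg_left ?_ hL0.le
      simp only [hu]
      linarith
    rw [tendsto_zero_iff_norm_tendsto_zero]
    simpa using hsq.sqrt
  have hcomm : ∀ (n : ℕ) (z : H), ((1 - S) ^ n) (S z) = S (((1 - S) ^ n) z) := by
    intro n z
    have h : Commute ((1 - S) ^ n) S :=
      ((Commute.one_left S).sub_left (Commute.refl S)).pow_left n
    exact DFunLike.congr_fun h.eq z
  -- the kernel of `S` lies in the intersection
  have hker : ∀ w : H, S w = 0 → w ∈ ⨅ k, V k := by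
    intro w hw
    have h := hSin w w
    rw [hw, inner_zero_left, hasSum_zero_iff_of_nonneg (hterm w)] at h
    rw [Submodule.mem_iInf]
    intro k
    have hk := congrFun h k
    simp only [Pi.zero_apply, mul_eq_zero, (hγ k).ne', false_or, inner_self_eq_zero] at hk
    simpa [hk] using (hQ k w).2
  have hVS : ∀ w ∈ ⨅ k, V k, S w = 0 := by
    intro w hw
    rw [Submodule.mem_iInf] at hw
    have h := hSin w w
    have hz : ∀ k, Q k w = 0 := by
      intro k
      have := (Submodule.mem_orthogonal' _ _).1 (hQ k w).1 _ (hw k)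
      rwa [hQin, inner_self_eq_zero] at this
    refine (hS w).unique ?_
    simp [hz, hasSum_zero]
  have hfix : ∀ n : ℕ, ((1 - S) ^ n) (P x) = P x := by
    intro n
    induction n with
    | zero => simp
    | succ n ih => rw [hsucc, ih]; simp [hVS _ (hP x).1]
  have hcl : x - P x ∈ closure (Set.range S) := by
    have h1 : x - P x ∈ (LinearMap.range S.toLinearMap)ᗮᗮ := by
      refine Submodule.orthogonal_le ?_ (hP x).2
      intro w hw
      refine hker w ?_
      rw [Submodule.mem_orthogonal'] at hw
      have := hw (S (S w)) ⟨S w, rfl⟩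
      rwa [← hsym, inner_self_eq_zero] at this
    rw [Submodule.orthogonal_orthogonal_eq_closure] at h1
    rw [← SetLike.mem_coe, Submodule.topologicalClosure_coe] at h1
    exact h1
  have hz : Tendsto (fun n : ℕ => ((1 - S) ^ n) (x - P x)) atTop (nhds 0) := by
    rw [Metric.tendsto_atTop]
    intro ε hε
    obtain ⟨_, ⟨z, rfl⟩, hd⟩ := Metric.mem_closure_iff.1 hcl (ε / 2) (by linarith)
    obtain ⟨N, hN⟩ := Metric.tendsto_atTop.1 (hST z) (ε / 2) (by linarith)
    refine ⟨N, fun n hn => ?_⟩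
    have h1 := hN n hn
    rw [dist_zero_right] at h1 ⊢
    rw [dist_eq_norm] at hd
    have h2 : ((1 - S) ^ n) (x - P x)
        = ((1 - S) ^ n) (x - P x - S z) + S (((1 - S) ^ n) z) := by
      rw [← hcomm, ← map_add, sub_add_cancel]
    rw [h2]
    have h3 := hTn n (x - P x - S z)
    have h4 := norm_add_le (((1 - S) ^ n) (x - P x - S z)) (S (((1 - S) ^ n) z))
    linarith
  have hfin := hz.add_const (P x)
  simpa [map_sub, hfix] using hfin
end

section
/- For integers 1 ≤ n ≤ M and γ ∈ ℝ define q(n,M,γ) := (M! / ((M−n)! (n−1)!)) · ∫_0^γ t^{n−1} (1−t)^{M−n} dt. Then for every fixed integer n ≥ 1 and every real γ with 0 < γ < 2, one has q(n,M,γ) → 1 as M → ∞. -/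
open Filter

lemma resum_base (γ : ℝ) (m : ℕ) :
    ((m : ℝ) + 1) * ∫ t in (0 : ℝ)..γ, (1 - t) ^ m = 1 - (1 - γ) ^ (m + 1) := by
  rw [← intervalIntegral.integral_const_mul]
  rw [intervalIntegral.integral_eq_sub_of_hasDerivAt (f := fun t : ℝ => -(1 - t) ^ (m + 1))]
  · simp; ring
  · intro t _
    have h := (((hasDerivAt_id t).const_sub 1).pow (m + 1)).neg
    exact HasDerivAt.congr_deriv h (by simp)
  · apply Continuous.intervalIntegrable
    fun_prop

lemma resum_rec (γ : ℝ) (k m : ℕ) :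
    ((m : ℝ) + 1) * (∫ t in (0 : ℝ)..γ, t ^ (k + 1) * (1 - t) ^ m) =
      ((k : ℝ) + 1) * (∫ t in (0 : ℝ)..γ, t ^ k * (1 - t) ^ (m + 1))
        - γ ^ (k + 1) * (1 - γ) ^ (m + 1) := by
  have key : ∫ t in (0 : ℝ)..γ, (((k : ℝ) + 1) * (t ^ k * (1 - t) ^ (m + 1))
      - ((m : ℝ) + 1) * (t ^ (k + 1) * (1 - t) ^ m)) = γ ^ (k + 1) * (1 - γ) ^ (m + 1) := by
    rw [intervalIntegral.integral_eq_sub_of_hasDerivAt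
      (f := fun t : ℝ => t ^ (k + 1) * (1 - t) ^ (m + 1))]
    · simp
    · intro t _
      have h := ((hasDerivAt_id t).pow (k + 1)).mul
        (((hasDerivAt_id t).const_sub 1).pow (m + 1))
      exact HasDerivAt.congr_deriv h (by simp; ring)
    · apply Continuous.intervalIntegrable
      fun_prop
  rw [intervalIntegral.integral_sub, intervalIntegral.integral_const_mul,
    intervalIntegral.integral_const_mul] at key
  · linarith
  · apply Continuous.intervalIntegrable
    fun_prop
  · apply Continuous.intervalIntegrable
    fun_prop

lemma resum_main (γ : ℝ) (hγ0 : 0 < γ) (hγ2 : γ < 2) (k : ℕ) :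
    Tendsto (fun m : ℕ => ((m + k + 1).factorial : ℝ) / (m.factorial * k.factorial) *
      ∫ t in (0 : ℝ)..γ, t ^ k * (1 - t) ^ m) atTop (nhds 1) := by
  have hr : ‖1 - γ‖ < 1 := by
    rw [Real.norm_eq_abs, abs_lt]; constructor <;> linarith
  induction k with
  | zero =>
    have h : Tendsto (fun m : ℕ => 1 - (1 - γ) ^ (m + 1)) atTop (nhds (1 - 0)) :=
      tendsto_const_nhds.sub
        ((tendsto_add_atTop_iff_nat 1).2 (tendsto_pow_atTop_nhds_zero_of_norm_lt_one hr))
    rw [sub_zero] at h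
    refine h.congr fun m => ?_
    rw [← resum_base]
    have : (m.factorial : ℝ) ≠ 0 := by positivity
    simp only [add_zero, Nat.factorial_succ, Nat.factorial_zero, pow_zero, one_mul]
    push_cast
    field_simp
  | succ k ih =>
    have h1 := (tendsto_add_atTop_iff_nat 1).2 ih
    have h2 := (tendsto_add_atTop_iff_nat 1).2
      (summable_choose_mul_geometric_of_norm_lt_one (k + 1) hr).tendsto_atTop_zero
    have h3 := h1.sub (h2.const_mul (γ ^ (k + 1)))
    rw [mul_zero, sub_zero] at h3
    refine h3.congr fun m => ?_
    have hrec := resum_rec γ k m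
    have hm : ((m : ℝ) + 1) ≠ 0 := by positivity
    have hI : (∫ t in (0 : ℝ)..γ, t ^ (k + 1) * (1 - t) ^ m) =
      (((k : ℝ) + 1) * (∫ t in (0 : ℝ)..γ, t ^ k * (1 - t) ^ (m + 1))
        - γ ^ (k + 1) * (1 - γ) ^ (m + 1)) / ((m : ℝ) + 1) := by
      rw [eq_div_iff hm, ← hrec]; ring
    rw [hI, ← Nat.choose_symm_add, Nat.cast_add_choose, show m + 1 + (k + 1) = m + 1 + k + 1 by ring,
      show m + (k + 1) + 1 = m + 1 + k + 1 by ring, Nat.factorial_succ m, Nat.factorial_succ k]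
    have : (m.factorial : ℝ) ≠ 0 := by positivity
    have : (k.factorial : ℝ) ≠ 0 := by positivity
    push_cast
    field_simp

/-- **The resummation coefficients tend to `1`.**
For fixed `n ≥ 1` and `0 < γ < 2`, the coefficients
`q(n,M,γ) := M!/((M−n)!(n−1)!) ∫_0^γ t^{n−1}(1−t)^{M−n} dt` satisfy `q(n,M,γ) → 1`
as `M → ∞`. -/
theorem resummation_coefficient_tendsto_one
    (n : ℕ) (hn : 1 ≤ n) (γ : ℝ) (hγ0 : 0 < γ) (hγ2 : γ < 2) :
    Tendsto
      (fun M : ℕ =>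
        (M.factorial : ℝ) / ((M - n).factorial * (n - 1).factorial) *
          ∫ t in (0 : ℝ)..γ, t ^ (n - 1) * (1 - t) ^ (M - n))
      atTop (nhds 1) := by
  rw [← tendsto_add_atTop_iff_nat n]
  refine (resum_main γ hγ0 hγ2 (n - 1)).congr fun m => ?_
  rw [Nat.add_sub_cancel, show m + (n - 1) + 1 = m + n by omega]
end

section
/- Let z ∈ ℝ³ and 0 < ρ < R. Let u : ℝ³ → ℝ be continuously differentiable on the open ball B_R(z) and suppose u = 0 on B_ρ(z). Then ∫_{B_R(z)} |u(y)|² dy ≤ (R³/ρ) ∫_{B_R(z)} |∇u(y)|² dy. -/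
open MeasureTheory
open scoped ENNReal

/-- Polar coordinates in `ℝ³` for lower Lebesgue integrals. -/
lemma polar_lintegral (F : EuclideanSpace ℝ (Fin 3) → ℝ≥0∞) (hF : Measurable F) :
    ∫⁻ y, F y = ∫⁻ w, (∫⁻ r in Set.Ioi (0 : ℝ), ENNReal.ofReal (r ^ 2) *
      F (r • (w : EuclideanSpace ℝ (Fin 3))))
      ∂(volume : Measure (EuclideanSpace ℝ (Fin 3))).toSphere := by
  have hmp := (volume : Measure (EuclideanSpace ℝ (Fin 3))).measurePreserving_homeomorphUnitSphereProd
  have hd : Module.finrank ℝ (EuclideanSpace ℝ (Fin 3)) - 1 = 2 := by simp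
  rw [hd] at hmp
  have hm : Measurable (fun p : Metric.sphere (0 : EuclideanSpace ℝ (Fin 3)) 1 × Set.Ioi (0 : ℝ) =>
      F ((p.2 : ℝ) • (p.1 : EuclideanSpace ℝ (Fin 3)))) := by
    apply hF.comp
    fun_prop
  have h1 := hmp.lintegral_comp hm
  have h2 : ∀ a : ({0}ᶜ : Set (EuclideanSpace ℝ (Fin 3))),
      (((homeomorphUnitSphereProd _ a).2 : ℝ)) •
        ((homeomorphUnitSphereProd _ a).1 : EuclideanSpace ℝ (Fin 3)) = a := by
    intro a
    rw [← homeomorphUnitSphereProd_symm_apply_coe]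
    simp
  simp only [h2] at h1
  rw [lintegral_subtype_comap (measurableSet_singleton _).compl, restrict_compl_singleton] at h1
  rw [h1, lintegral_prod _ hm.aemeasurable]
  refine lintegral_congr fun w => ?_
  have hFw : Measurable (fun r : ℝ => F (r • (w : EuclideanSpace ℝ (Fin 3)))) := by
    apply hF.comp
    fun_prop
  rw [Measure.volumeIoiPow]
  refine (lintegral_withDensity_eq_lintegral_mul _ (by fun_prop)
    (hFw.comp measurable_subtype_coe)).trans ?_
  exact lintegral_subtype_comap measurableSet_Ioi
    (fun r : ℝ => ENNReal.ofReal (r ^ 2) * F (r • (w : EuclideanSpace ℝ (Fin 3))))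

lemma lintegral_inv_sq (ρ : ℝ) (hρ : 0 < ρ) :
    ∫⁻ s in Set.Ici ρ, ENNReal.ofReal s⁻¹ ^ 2 = ENNReal.ofReal (1 / ρ) := by
  rw [setLIntegral_congr Ioi_ae_eq_Ici.symm]
  have h := integral_Ioi_rpow_of_lt (a := -2) (by norm_num) hρ
  have hi := integrableOn_Ioi_rpow_of_lt (a := -2) (by norm_num) hρ
  have h2 := ofReal_integral_eq_lintegral_ofReal hi (by
    filter_upwards [ae_restrict_mem measurableSet_Ioi] with x hx
    have : 0 < x := hρ.trans hx
    simp only [Pi.zero_apply]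
    positivity)
  rw [h] at h2
  have h3 : -ρ ^ (-2 + 1 : ℝ) / (-2 + 1) = 1 / ρ := by
    have : (-2 + 1 : ℝ) = -1 := by norm_num
    rw [this, Real.rpow_neg_one]
    field_simp
  rw [h3] at h2
  rw [h2]
  refine setLIntegral_congr_fun measurableSet_Ioi fun x hx => ?_
  have hx0 : 0 < x := hρ.trans hx
  rw [← ENNReal.ofReal_pow (by positivity)]
  congr 1
  rw [Real.rpow_neg hx0.le, Real.rpow_two, inv_pow]

lemma ray_bound (ρ r : ℝ) (hρ : 0 < ρ) (hr : 0 ≤ r) (f f' : ℝ → ℝ) (g : ℝ → ℝ≥0∞)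
    (hg : Measurable g) (hf : ∀ x ∈ Set.Icc 0 r, HasDerivAt f (f' x) x)
    (hc : ContinuousOn f' (Set.Icc 0 r)) (h0 : ∀ x, 0 < x → x < ρ → f' x = 0)
    (hf0 : f 0 = 0) (hfg : ∀ x ∈ Set.Icc 0 r, ‖f' x‖ₑ ≤ g x) :
    ‖f r‖ₑ ^ 2 ≤ ENNReal.ofReal (1 / ρ) *
      ∫⁻ s in Set.Ioc 0 r, ENNReal.ofReal (s ^ 2) * g s ^ 2 := by
  have h1 := intervalIntegral.integral_eq_sub_of_hasDerivAt (a := 0) (b := r) (f := f) (f' := f')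
    (by rwa [Set.uIcc_of_le hr]) (by
      apply ContinuousOn.intervalIntegrable
      rwa [Set.uIcc_of_le hr])
  rw [hf0, sub_zero, intervalIntegral.integral_of_le hr] at h1
  set h : ℝ → ℝ≥0∞ := (Set.Ici ρ).indicator fun s => ENNReal.ofReal s⁻¹ with hh
  set k : ℝ → ℝ≥0∞ := fun s => ENNReal.ofReal s * g s with hk
  have hhm : Measurable h := by
    apply Measurable.indicator _ measurableSet_Ici
    fun_prop
  have hkm : Measurable k := by fun_prop
  have h2 : ‖f r‖ₑ ≤ ∫⁻ s in Set.Ioc 0 r, (h * k) s := by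
    rw [← h1]
    refine (enorm_integral_le_lintegral_enorm _).trans ?_
    refine setLIntegral_mono (hhm.mul hkm) fun s hs => ?_
    by_cases hsρ : s < ρ
    · simp [h0 s hs.1 hsρ]
    · have hs0 : 0 < s := hs.1
      have : (h * k) s = g s := by
        simp only [Pi.mul_apply, hh, hk]
        rw [Set.indicator_of_mem (by simpa using hsρ), ← mul_assoc,
          ← ENNReal.ofReal_mul (by positivity), inv_mul_cancel₀ hs0.ne', ENNReal.ofReal_one, one_mul]
      rw [this]
      exact hfg s ⟨hs.1.le, hs.2⟩
  have h3 := ENNReal.lintegral_mul_le_Lp_mul_Lq (volume.restrict (Set.Ioc 0 r))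
    Real.HolderConjugate.two_two hhm.aemeasurable hkm.aemeasurable
  have h4 := pow_le_pow_left' (h2.trans h3) 2
  refine h4.trans ?_
  have hsq : ∀ a : ℝ≥0∞, (a ^ (1 / 2 : ℝ)) ^ 2 = a := by
    intro a
    rw [← ENNReal.rpow_natCast, ← ENNReal.rpow_mul]
    norm_num
  rw [mul_pow, hsq, hsq]
  simp only [ENNReal.rpow_two]
  gcongr ?_ * ?_
  · rw [← lintegral_inv_sq ρ hρ]
    have : (fun s => h s ^ 2) = (Set.Ici ρ).indicator fun s => ENNReal.ofReal s⁻¹ ^ 2 := by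
      ext s
      by_cases hs : s ∈ Set.Ici ρ
      · simp only [hh, Set.indicator_of_mem hs]
      · simp only [hh, Set.indicator_of_notMem hs]; simp
    rw [this, ← lintegral_indicator measurableSet_Ici]
    exact setLIntegral_le_lintegral _ _
  · refine setLIntegral_mono (by fun_prop) fun s hs => ?_
    simp only [hk]
    rw [mul_pow, ENNReal.ofReal_pow hs.1.le]

/-- **Local Poincaré inequality for functions vanishing on an inner ball.**
If `u` is `C¹` on the ball `B_R(z) ⊂ ℝ³` and vanishes on `B_ρ(z)` with `0 < ρ < R`, then
`∫_{B_R(z)} u² ≤ (R³/ρ) ∫_{B_R(z)} |∇u|²`. -/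
theorem poincare_ball_of_zero_on_inner_ball
    (z : EuclideanSpace ℝ (Fin 3)) (ρ R : ℝ) (hρ : 0 < ρ) (hρR : ρ < R)
    (u : EuclideanSpace ℝ (Fin 3) → ℝ)
    (hu : ContDiffOn ℝ 1 u (Metric.ball z R))
    (hu0 : ∀ y ∈ Metric.ball z ρ, u y = 0) :
    ∫⁻ y in Metric.ball z R, (‖u y‖₊ : ℝ≥0∞) ^ 2
      ≤ ENNReal.ofReal (R ^ 3 / ρ) *
          ∫⁻ y in Metric.ball z R, (‖gradient u y‖₊ : ℝ≥0∞) ^ 2 := by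
  have hR : 0 < R := hρ.trans hρR
  have hgm : Measurable (fun y => (‖gradient u y‖₊ : ℝ≥0∞)) := by
    have h1 : Measurable (fun y => gradient u y) := by
      unfold gradient
      exact (LinearIsometryEquiv.continuous _).measurable.comp (measurable_fderiv ℝ u)
    fun_prop
  have hum : Measurable ((Metric.ball z R).indicator fun y => (‖u y‖₊ : ℝ≥0∞) ^ 2) := by
    have h1 : Measurable ((Metric.ball z R).indicator u) := by
      have := hu.continuousOn
      classical
      rw [← Set.piecewise_eq_indicator]
      exact this.measurable_piecewise continuousOn_const measurableSet_ball
    have h2 : ((Metric.ball z R).indicator fun y => (‖u y‖₊ : ℝ≥0∞) ^ 2) =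
        fun y => (‖(Metric.ball z R).indicator u y‖₊ : ℝ≥0∞) ^ 2 := by
      ext y
      by_cases hy : y ∈ Metric.ball z R <;> simp [hy]
    rw [h2]
    fun_prop
  have hGm : Measurable ((Metric.ball z R).indicator
      fun y => (‖gradient u y‖₊ : ℝ≥0∞) ^ 2) := (hgm.pow_const 2).indicator measurableSet_ball
  rw [← lintegral_indicator measurableSet_ball, ← lintegral_indicator measurableSet_ball,
    ← lintegral_add_left_eq_self _ z, ← lintegral_add_left_eq_self
      ((Metric.ball z R).indicator fun y => (‖gradient u y‖₊ : ℝ≥0∞) ^ 2) z,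
    polar_lintegral _ (by fun_prop), polar_lintegral _ (by fun_prop),
    ← lintegral_const_mul' _ _ ENNReal.ofReal_ne_top]
  refine lintegral_mono fun w => ?_
  have hw : ‖(w : EuclideanSpace ℝ (Fin 3))‖ = 1 := by simp
  generalize (w : EuclideanSpace ℝ (Fin 3)) = e at hw
  have hball : ∀ T r : ℝ, 0 ≤ r → (z + r • e ∈ Metric.ball z T ↔ r < T) := by
    intro T r hr
    simp [norm_smul, hw, abs_of_nonneg hr]
  have key : ∀ v : EuclideanSpace ℝ (Fin 3) → ℝ≥0∞,
      ∫⁻ r in Set.Ioi (0 : ℝ), ENNReal.ofReal (r ^ 2) *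
        (Metric.ball z R).indicator v (z + r • e) =
      ∫⁻ r in Set.Ioo (0 : ℝ) R, ENNReal.ofReal (r ^ 2) * v (z + r • e) := by
    intro v
    rw [← lintegral_indicator measurableSet_Ioi, ← lintegral_indicator measurableSet_Ioo]
    congr 1
    ext r
    by_cases h0 : 0 < r
    · by_cases h1 : r < R
      · simp [Set.indicator, h0, h1, (hball R r h0.le).2 h1, -Metric.mem_ball]
      · simp [Set.indicator, h0, h1, (hball R r h0.le), -Metric.mem_ball]
    · simp [Set.indicator, h0]
  rw [key, key]
  set G := ∫⁻ r in Set.Ioo (0 : ℝ) R, ENNReal.ofReal (r ^ 2) *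
    (‖gradient u (z + r • e)‖₊ : ℝ≥0∞) ^ 2 with hG
  have hdiff : ∀ y ∈ Metric.ball z R, DifferentiableAt ℝ u y := fun y hy =>
    (hu.differentiableOn one_ne_zero).differentiableAt (Metric.isOpen_ball.mem_nhds hy)
  have hpt : ∀ r ∈ Set.Ioo (0 : ℝ) R,
      ENNReal.ofReal (r ^ 2) * (‖u (z + r • e)‖₊ : ℝ≥0∞) ^ 2 ≤
        ENNReal.ofReal (R ^ 2) * (ENNReal.ofReal (1 / ρ) * G) := by
    intro r hr
    have hmem : ∀ x ∈ Set.Icc 0 r, z + x • e ∈ Metric.ball z R := fun x hx =>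
      (hball R x hx.1).2 (hx.2.trans_lt hr.2)
    have hb := ray_bound ρ r hρ hr.1.le (fun s => u (z + s • e))
      (fun s => fderiv ℝ u (z + s • e) e)
      (fun s => (‖gradient u (z + s • e)‖₊ : ℝ≥0∞))
      (hgm.comp (by fun_prop)) ?_ ?_ ?_ ?_ ?_
    · gcongr
      · exact hr.1.le
      · exact hr.2.le
      · refine hb.trans ?_
        gcongr
        exact lintegral_mono_set fun s hs => ⟨hs.1, hs.2.trans_lt hr.2⟩
    · intro x hx
      have h1 : HasDerivAt (fun s : ℝ => z + s • e) e x := by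
        simpa using ((hasDerivAt_id x).smul_const e).const_add z
      exact (hdiff _ (hmem x hx)).hasFDerivAt.comp_hasDerivAt x h1
    · have h1 : ContinuousOn (fderiv ℝ u) (Metric.ball z R) :=
        hu.continuousOn_fderiv_of_isOpen Metric.isOpen_ball le_rfl
      have h2 : ContinuousOn (fun s : ℝ => fderiv ℝ u (z + s • e)) (Set.Icc 0 r) :=
        h1.comp (by fun_prop) hmem
      exact h2.clm_apply continuousOn_const
    · intro x hx hxρ
      have h1 : u =ᶠ[nhds (z + x • e)] fun _ => 0 := by
        filter_upwards [Metric.isOpen_ball.mem_nhds ((hball ρ x hx.le).2 hxρ)] with y hy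
        exact hu0 y hy
      simp [h1.fderiv_eq]
    · exact hu0 _ ((hball ρ 0 le_rfl).2 hρ)
    · intro x hx
      rw [← inner_gradient_left]
      have := norm_inner_le_norm (𝕜 := ℝ) (gradient u (z + x • e)) e
      rw [hw, mul_one] at this
      exact enorm_le_iff_norm_le.2 this
  refine (setLIntegral_mono measurable_const hpt).trans ?_
  rw [setLIntegral_const, Real.volume_Ioo, sub_zero]
  apply le_of_eq
  have : R ^ 3 / ρ = R ^ 2 * (1 / ρ) * R := by field_simp
  rw [this, ENNReal.ofReal_mul (by positivity), ENNReal.ofReal_mul (by positivity)]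
  ring
end

section
/- There exists a universal constant C > 0 with the following property. For all d > 0 and all r with 0 < r < d/2, if u : ℝ³ → ℝ is continuously differentiable with compact support and u vanishes on the perforated set K_r = ⋃_{x ∈ (dℤ)³} cl(B_r(x)), then ∫_{ℝ³} |u(y)|² dy ≤ C (d³/r) ∫_{ℝ³} |∇u(y)|² dy. -/
open MeasureTheory
open scoped ENNReal

/-- The perforated set `K_r = ⋃_{x ∈ (dℤ)³} cl(B_r(x))`: the union of the closed balls of
radius `r` centered at the points of the lattice `(dℤ)³ ⊂ ℝ³`. -/
def latticePerforation (d r : ℝ) : Set (EuclideanSpace ℝ (Fin 3)) :=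
  ⋃ x ∈ {x : EuclideanSpace ℝ (Fin 3) | ∀ i, ∃ m : ℤ, x i = m * d},
    Metric.closedBall x r

namespace PerfPoincare

abbrev E3 := EuclideanSpace ℝ (Fin 3)

/-- Polar coordinates in `ℝ³` for the lower integral. -/
lemma lintegral_polar (f : E3 → ℝ≥0∞) (hf : Measurable f) :
    ∫⁻ x, f x = ∫⁻ w : Metric.sphere (0 : E3) 1,
      (∫⁻ s in Set.Ioi (0 : ℝ), ENNReal.ofReal (s ^ 2) * f (s • (w : E3)))
        ∂(volume : Measure E3).toSphere := by
  have hdim : Module.finrank ℝ E3 - 1 = 2 := by simp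
  have hmp := (volume : Measure E3).measurePreserving_homeomorphUnitSphereProd
  rw [hdim] at hmp
  have hF : Measurable (fun p : Metric.sphere (0 : E3) 1 × Set.Ioi (0 : ℝ) =>
      f ((p.2 : ℝ) • (p.1 : E3))) := by
    apply hf.comp
    fun_prop
  calc ∫⁻ x, f x = ∫⁻ x : ({(0 : E3)}ᶜ : Set E3), f x ∂((volume : Measure E3).comap Subtype.val) := by
        rw [lintegral_subtype_comap (measurableSet_singleton _).compl, restrict_compl_singleton]
    _ = ∫⁻ p, f ((p.2 : ℝ) • (p.1 : E3))
          ∂((volume : Measure E3).toSphere.prod (Measure.volumeIoiPow 2)) := by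
        rw [← hmp.lintegral_comp hF]
        refine lintegral_congr fun x => ?_
        have hx : ‖(x : E3)‖ ≠ 0 := norm_ne_zero_iff.2 x.2
        simp [smul_smul, hx]
    _ = ∫⁻ w, ∫⁻ s : Set.Ioi (0 : ℝ), f ((s : ℝ) • (w : E3)) ∂(Measure.volumeIoiPow 2)
          ∂(volume : Measure E3).toSphere := by
        rw [lintegral_prod _ hF.aemeasurable]
    _ = _ := by
        refine lintegral_congr fun w => ?_
        have hm : Measurable (fun s : Set.Ioi (0 : ℝ) => f ((s : ℝ) • (w : E3))) := by
          apply hf.comp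
          fun_prop
        rw [Measure.volumeIoiPow, lintegral_withDensity_eq_lintegral_mul _ (by fun_prop) hm]
        exact lintegral_subtype_comap measurableSet_Ioi
          (fun s : ℝ => ENNReal.ofReal (s ^ 2) * f (s • (w : E3)))

/-- `∫_r^ρ s⁻² ds ≤ 1/r`. -/
lemma inv_sq_bound (r ρ : ℝ) (hr : 0 < r) (hρ : r ≤ ρ) :
    ∫⁻ s in Set.Ioc r ρ, ENNReal.ofReal (s⁻¹) ^ 2 ≤ ENNReal.ofReal (1 / r) := by
  have hcont : ContinuousOn (fun s : ℝ => (s ^ 2)⁻¹) (Set.uIcc r ρ) := by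
    rw [Set.uIcc_of_le hρ]
    apply ContinuousOn.inv₀ (by fun_prop)
    intro x hx
    have : 0 < x := hr.trans_le hx.1
    positivity
  have hint : IntervalIntegrable (fun s : ℝ => (s ^ 2)⁻¹) volume r ρ := hcont.intervalIntegrable
  have h1 : ∫ s in r..ρ, (s ^ 2)⁻¹ = (-ρ⁻¹) - (-r⁻¹) := by
    apply intervalIntegral.integral_eq_sub_of_hasDerivAt (f := fun s : ℝ => -s⁻¹) _ hint
    intro x hx
    rw [Set.uIcc_of_le hρ] at hx
    have hx0 : x ≠ 0 := by linarith [hx.1]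
    simpa using (hasDerivAt_inv hx0).fun_neg
  have h2 : ∫⁻ s in Set.Ioc r ρ, ENNReal.ofReal (s⁻¹) ^ 2
      = ENNReal.ofReal (∫ s in r..ρ, (s ^ 2)⁻¹) := by
    rw [intervalIntegral.integral_of_le hρ, ofReal_integral_eq_lintegral_ofReal hint.1]
    · refine setLIntegral_congr_fun measurableSet_Ioc fun s hs => ?_
      have : 0 < s := hr.trans hs.1
      rw [← ENNReal.ofReal_pow (by positivity), inv_pow]
    · exact Filter.Eventually.of_forall fun s => by positivity
  rw [h2, h1]
  apply ENNReal.ofReal_le_ofReal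
  have : 0 < ρ⁻¹ := inv_pos.2 (by linarith)
  rw [one_div]; linarith

/-- One-dimensional estimate. -/
lemma one_dim (h : ℝ → ℝ) (hh : ContDiff ℝ 1 h) (r ρ : ℝ) (hr : 0 < r) (hρ : r ≤ ρ)
    (h0 : h r = 0) :
    ‖h ρ‖ₑ ^ 2 ≤ ENNReal.ofReal (1 / r) *
      ∫⁻ s in Set.Ioc r ρ, ENNReal.ofReal (s ^ 2) * ‖deriv h s‖ₑ ^ 2 := by
  have hc : Continuous (deriv h) := hh.continuous_deriv (by norm_num)
  have e1 : h ρ = ∫ s in r..ρ, deriv h s := by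
    rw [intervalIntegral.integral_deriv_eq_sub
      (fun x _ => (hh.differentiable (by norm_num)) x) (hc.intervalIntegrable _ _), h0, sub_zero]
  have e2 : ‖h ρ‖ₑ ≤ ∫⁻ s in Set.Ioc r ρ, ‖deriv h s‖ₑ := by
    rw [e1, intervalIntegral.integral_of_le hρ]
    exact enorm_integral_le_lintegral_enorm _
  have e3 : ∫⁻ s in Set.Ioc r ρ, ‖deriv h s‖ₑ =
      ∫⁻ s in Set.Ioc r ρ, ((fun s => ENNReal.ofReal s⁻¹) *
        (fun s => ENNReal.ofReal s * ‖deriv h s‖ₑ)) s := by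
    refine setLIntegral_congr_fun measurableSet_Ioc fun s hs => ?_
    have hs0 : 0 < s := hr.trans hs.1
    simp only [Pi.mul_apply]
    rw [← mul_assoc, ← ENNReal.ofReal_mul (by positivity), inv_mul_cancel₀ hs0.ne']
    simp
  have e4 := ENNReal.lintegral_mul_le_Lp_mul_Lq (volume.restrict (Set.Ioc r ρ))
    Real.HolderConjugate.two_two
    (f := fun s : ℝ => ENNReal.ofReal s⁻¹) (g := fun s => ENNReal.ofReal s * ‖deriv h s‖ₑ)
    (by fun_prop) (by fun_prop)
  rw [← e3] at e4
  have e5 := e2.trans e4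
  calc ‖h ρ‖ₑ ^ 2 ≤ _ := pow_le_pow_left' e5 2
    _ = (∫⁻ s in Set.Ioc r ρ, ENNReal.ofReal (s⁻¹) ^ 2) *
        ∫⁻ s in Set.Ioc r ρ, ENNReal.ofReal (s ^ 2) * ‖deriv h s‖ₑ ^ 2 := by
      rw [mul_pow, ← ENNReal.rpow_natCast, ← ENNReal.rpow_natCast, ← ENNReal.rpow_mul,
        ← ENNReal.rpow_mul]
      norm_num
      congr 1
      refine setLIntegral_congr_fun measurableSet_Ioc fun s hs => ?_
      have hs0 : 0 < s := hr.trans hs.1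
      rw [mul_pow, ENNReal.ofReal_pow hs0.le]
    _ ≤ _ := by
      gcongr
      exact inv_sq_bound r ρ hr hρ

lemma ray (v : E3 → ℝ) (hv : ContDiff ℝ 1 v) (Q : Set E3)
    (hstar : ∀ y ∈ Q, ∀ t : ℝ, 0 ≤ t → t ≤ 1 → t • y ∈ Q)
    (r R : ℝ) (hr : 0 < r) (hQR : ∀ y ∈ Q, ‖y‖ ≤ R)
    (h0 : ∀ y : E3, ‖y‖ ≤ r → v y = 0) (w : E3) (hw : ‖w‖ = 1) :
    ∫⁻ s in Set.Ioi (0 : ℝ), ENNReal.ofReal (s ^ 2) *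
        Q.indicator (fun y => ‖v y‖ₑ ^ 2) (s • w) ≤
      ENNReal.ofReal (R ^ 3 / r) * ∫⁻ s in Set.Ioi (0 : ℝ), ENNReal.ofReal (s ^ 2) *
        Q.indicator (fun y => ‖gradient v y‖ₑ ^ 2) (s • w) := by
  set G := ∫⁻ s in Set.Ioi (0 : ℝ), ENNReal.ofReal (s ^ 2) *
        Q.indicator (fun y => ‖gradient v y‖ₑ ^ 2) (s • w) with hG
  have key : ∀ ρ ∈ Set.Ioi (0 : ℝ), ρ • w ∈ Q → ‖v (ρ • w)‖ₑ ^ 2 ≤ ENNReal.ofReal (1 / r) * G := by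
    intro ρ hρ hρQ
    have hρ0 : (0 : ℝ) < ρ := hρ
    rcases le_total ρ r with hle | hle
    · rw [h0 _ (by rw [norm_smul, hw, Real.norm_of_nonneg hρ0.le]; linarith)]
      simp
    · refine (one_dim (fun s => v (s • w)) (hv.comp (by fun_prop)) r ρ hr hle
        (h0 _ (by rw [norm_smul, hw, Real.norm_of_nonneg hr.le]; linarith))).trans ?_
      gcongr
      rw [hG]
      refine le_trans (setLIntegral_mono' measurableSet_Ioc fun s hs => ?_)
        (lintegral_mono_set (fun s hs => (hr.trans hs.1 : (0:ℝ) < s)))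
      have hs0 : 0 < s := hr.trans hs.1
      have hsQ : s • w ∈ Q := by
        have := hstar _ hρQ (s / ρ) (by positivity) ((div_le_one hρ0).2 hs.2)
        rwa [smul_smul, div_mul_cancel₀ _ hρ0.ne'] at this
      rw [Set.indicator_of_mem hsQ]
      gcongr
      have hd : HasFDerivAt v (fderiv ℝ v (s • w)) (s • w) :=
        ((hv.differentiable (by norm_num)) _).hasFDerivAt
      have h1 : HasDerivAt (fun s : ℝ => s • w) w s := by
        simpa using (hasDerivAt_id s).smul_const w
      have h2 := hd.comp_hasDerivAt s h1
      have h3 : deriv (fun s : ℝ => v (s • w)) s = fderiv ℝ v (s • w) w := h2.deriv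
      rw [h3, ← ofReal_norm, ← ofReal_norm]
      apply ENNReal.ofReal_le_ofReal
      have h4 := (fderiv ℝ v (s • w)).le_opNorm w
      rw [hw, mul_one] at h4
      refine h4.trans_eq ?_
      rw [gradient, LinearIsometryEquiv.norm_map]
  calc _ ≤ ∫⁻ s in Set.Ioi (0 : ℝ), (Set.Ioc 0 R).indicator
        (fun _ => ENNReal.ofReal (R ^ 2) * (ENNReal.ofReal (1 / r) * G)) s := by
        refine setLIntegral_mono' measurableSet_Ioi fun s hs => ?_
        have hs0 : (0 : ℝ) < s := hs
        by_cases hQ : s • w ∈ Q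
        · have hsR : s ≤ R := by
            have := hQR _ hQ
            rwa [norm_smul, hw, mul_one, Real.norm_of_nonneg hs0.le] at this
          rw [Set.indicator_of_mem hQ, Set.indicator_of_mem (show s ∈ Set.Ioc 0 R from ⟨hs0, hsR⟩)]
          gcongr
          exact key s hs hQ
        · rw [Set.indicator_of_notMem hQ]; simp
    _ ≤ ∫⁻ s, (Set.Ioc 0 R).indicator
        (fun _ => ENNReal.ofReal (R ^ 2) * (ENNReal.ofReal (1 / r) * G)) s :=
        setLIntegral_le_lintegral _ _
    _ = ENNReal.ofReal (R ^ 3 / r) * G := by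
        rw [lintegral_indicator measurableSet_Ioc, setLIntegral_const, Real.volume_Ioc, sub_zero,
          ← mul_assoc, ← ENNReal.ofReal_mul (by positivity), mul_right_comm,
          ← ENNReal.ofReal_mul (by positivity)]
        congr 2
        field_simp

lemma cell (v : E3 → ℝ) (hv : ContDiff ℝ 1 v) (Q : Set E3) (hQm : MeasurableSet Q)
    (hstar : ∀ y ∈ Q, ∀ t : ℝ, 0 ≤ t → t ≤ 1 → t • y ∈ Q)
    (r R : ℝ) (hr : 0 < r) (hQR : ∀ y ∈ Q, ‖y‖ ≤ R)
    (h0 : ∀ y : E3, ‖y‖ ≤ r → v y = 0) :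
    ∫⁻ y in Q, ‖v y‖ₑ ^ 2 ≤ ENNReal.ofReal (R ^ 3 / r) * ∫⁻ y in Q, ‖gradient v y‖ₑ ^ 2 := by
  have hgc : Continuous (gradient v) := by
    unfold gradient
    exact (LinearIsometryEquiv.continuous _).comp (hv.continuous_fderiv (by norm_num))
  have hvc := hv.continuous
  rw [← lintegral_indicator hQm, ← lintegral_indicator hQm,
    lintegral_polar _ ((by fun_prop : Measurable fun y => ‖v y‖ₑ ^ 2).indicator hQm),
    lintegral_polar _ ((by fun_prop : Measurable fun y => ‖gradient v y‖ₑ ^ 2).indicator hQm),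
    ← lintegral_const_mul' _ _ ENNReal.ofReal_ne_top]
  exact lintegral_mono fun w => ray v hv Q hstar r R hr hQR h0 w (by simp)

/-- The half-open cube of side `d` centred at `d m`. -/
def cube (d : ℝ) (m : Fin 3 → ℤ) : Set E3 := {y | (fun i => ⌊y i / d + 1 / 2⌋) = m}

lemma measurableSet_cube (d : ℝ) (m : Fin 3 → ℤ) : MeasurableSet (cube d m) := by
  have : Measurable (fun (y : E3) (i : Fin 3) => ⌊y i / d + 1 / 2⌋) := by
    refine measurable_pi_lambda _ fun i => Int.measurable_floor.comp ?_
    fun_prop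
  exact this (measurableSet_singleton m)

lemma lintegral_cubes (d : ℝ) (f : E3 → ℝ≥0∞) :
    ∫⁻ y, f y = ∑' m : Fin 3 → ℤ, ∫⁻ y in cube d m, f y := by
  rw [← lintegral_iUnion (measurableSet_cube d), ← setLIntegral_univ]
  · congr 2
    symm
    exact Set.eq_univ_of_forall fun y => Set.mem_iUnion.2 ⟨_, rfl⟩
  · intro a b hab
    refine Set.disjoint_left.2 fun y h1 h2 => hab ?_
    exact Eq.trans (Eq.symm h1) h2

/-- Lattice point. -/
noncomputable def pt (d : ℝ) (m : Fin 3 → ℤ) : E3 := WithLp.toLp 2 fun i => (m i : ℝ) * d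

lemma shift_cube (d : ℝ) (hd : 0 < d) (m : Fin 3 → ℤ) (f : E3 → ℝ≥0∞) :
    ∫⁻ y in cube d m, f y = ∫⁻ y in cube d 0, f (pt d m + y) := by
  have hpre : (fun y => pt d m + y) ⁻¹' (cube d m) = cube d 0 := by
    ext y
    simp only [Set.mem_preimage, cube, Set.mem_ofPred_eq, funext_iff, pt, PiLp.add_apply,
      Pi.zero_apply]
    refine forall_congr' fun i => ?_
    rw [show ((m i : ℝ) * d + y i) / d + 1 / 2 = (y i / d + 1 / 2) + (m i : ℤ) by field_simp; ring,
      Int.floor_add_intCast]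
    omega
  rw [← hpre]
  exact ((measurePreserving_add_left volume (pt d m)).setLIntegral_comp_preimage_emb
    (measurableEmbedding_addLeft _) f _).symm

lemma mem_cube_zero (d : ℝ) (hd : 0 < d) (y : E3) :
    y ∈ cube d 0 ↔ ∀ i, -(d / 2) ≤ y i ∧ y i < d / 2 := by
  simp only [cube, Set.mem_ofPred_eq, funext_iff, Pi.zero_apply, Int.floor_eq_iff]
  refine forall_congr' fun i => ?_
  have : y i = (y i / d) * d := by field_simp
  constructor
  · rintro ⟨h1, h2⟩
    push_cast at h1 h2
    constructor <;> nlinarith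
  · rintro ⟨h1, h2⟩
    push_cast
    constructor <;> by_contra! h <;> nlinarith

end PerfPoincare

open PerfPoincare in
/-- **Poincaré inequality for perforated domains.**
There is a universal constant `C > 0` such that for `0 < r < d/2`, every compactly
supported `C¹` function `u : ℝ³ → ℝ` vanishing on the perforated set
`K_r = ⋃_{x ∈ (dℤ)³} cl(B_r(x))` satisfies `∫ u² ≤ C (d³/r) ∫ |∇u|²`. -/
theorem poincare_perforated_domain :
    ∃ C : ℝ, 0 < C ∧
      ∀ d r : ℝ, 0 < d → 0 < r → r < d / 2 →
        ∀ u : EuclideanSpace ℝ (Fin 3) → ℝ,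
          ContDiff ℝ 1 u → HasCompactSupport u →
          (∀ y ∈ latticePerforation d r, u y = 0) →
          ∫⁻ y, (‖u y‖₊ : ℝ≥0∞) ^ 2
            ≤ ENNReal.ofReal (C * (d ^ 3 / r)) *
                ∫⁻ y, (‖gradient u y‖₊ : ℝ≥0∞) ^ 2 := by
  refine ⟨1, one_pos, fun d r hd hr _ u hu _ h0 => ?_⟩
  rw [one_mul, lintegral_cubes d, lintegral_cubes d (fun y => (‖gradient u y‖₊ : ℝ≥0∞) ^ 2),
    ← ENNReal.tsum_mul_left]
  refine ENNReal.tsum_le_tsum fun m => ?_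
  rw [shift_cube d hd m, shift_cube d hd m]
  have hgrad : ∀ y, gradient u (pt d m + y) = gradient (fun z => u (pt d m + z)) y := by
    intro y
    simp only [gradient]
    rw [fderiv_comp_add_left]
  simp only [hgrad]
  refine cell (fun z => u (pt d m + z)) (hu.comp (by fun_prop)) (cube d 0)
    (measurableSet_cube d 0) ?_ r d hr ?_ ?_
  · intro y hy t ht0 ht1
    rw [mem_cube_zero d hd] at hy ⊢
    intro i
    obtain ⟨h1, h2⟩ := hy i
    simp only [PiLp.smul_apply, smul_eq_mul]
    constructor
    · nlinarith
    · rcases le_or_gt (y i) 0 with h | h <;> nlinarith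
  · intro y hy
    rw [mem_cube_zero d hd] at hy
    rw [EuclideanSpace.norm_eq]
    apply Real.sqrt_le_iff.2 ⟨hd.le, ?_⟩
    have h : ∀ i, ‖y i‖ ^ 2 ≤ d ^ 2 / 4 := by
      intro i
      obtain ⟨h1, h2⟩ := hy i
      rw [Real.norm_eq_abs, sq_abs]
      nlinarith
    rw [Fin.sum_univ_three]
    nlinarith [h 0, h 1, h 2, sq_nonneg d]
  · intro y hy
    apply h0
    refine Set.mem_biUnion (x := pt d m) (fun i => ⟨m i, rfl⟩) ?_
    simpa [Metric.mem_closedBall, dist_eq_norm] using hy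
end

section
/- There exists a universal constant C > 0 with the following property. For all d with 0 < d < 1/(2√3), all r with 0 < r < d/2, and all real s ≥ 1, if u : ℝ³ → ℝ is continuously differentiable and u vanishes on the perforated set K_r = ⋃_{x ∈ (dℤ)³} cl(B_r(x)), then ∫_{B_{s+1}(0) \ B_s(0)} |u(y)|² dy ≤ C (d³/r) ∫_{B_{s+1}(0) \ B_s(0)} |∇u(y)|² dy. -/
open MeasureTheory
open scoped ENNReal

/-- Three-dimensional Euclidean space. -/
abbrev E3 : Type := EuclideanSpace ℝ (Fin 3)

lemma lintegral_polar (z : E3) (f : E3 → ℝ≥0∞) (hf : Measurable f) :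
    ∫⁻ x, f x = ∫⁻ w : Metric.sphere (0 : E3) 1, (∫⁻ t in Set.Ioi (0 : ℝ),
      ENNReal.ofReal (t ^ 2) * f (z + t • (w : E3))) ∂(volume : Measure E3).toSphere := by
  have h1 : ∫⁻ x, f x = ∫⁻ x, f (z + x) := (lintegral_add_left_eq_self f z).symm
  have hg : Measurable (fun x => f (z + x)) := by fun_prop
  rw [h1]
  have h2 : ∫⁻ x, f (z + x) = ∫⁻ x : ({(0 : E3)}ᶜ : Set E3), f (z + x.1)
      ∂((volume : Measure E3).comap (↑)) := by
    rw [lintegral_subtype_comap (measurableSet_singleton _).compl (fun x => f (z + x)),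
      restrict_compl_singleton]
  rw [h2]
  have h3 := ((volume : Measure E3).measurePreserving_homeomorphUnitSphereProd).lintegral_comp_emb
    (Homeomorph.measurableEmbedding _)
    (fun p => f (z + ((p.2 : ℝ) • (p.1 : E3))))
  have h4 : ∀ x : ({(0 : E3)}ᶜ : Set E3), (((homeomorphUnitSphereProd E3 x).2 : ℝ) •
      ((homeomorphUnitSphereProd E3 x).1 : E3)) = x.1 := by
    intro x
    have hx : ‖(x : E3)‖ ≠ 0 := norm_ne_zero_iff.2 x.2
    simp [smul_smul, hx]
  simp only [h4] at h3
  rw [h3, lintegral_prod]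
  · refine lintegral_congr fun w => ?_
    rw [Measure.volumeIoiPow, lintegral_withDensity_eq_lintegral_mul]
    · have hfr : Module.finrank ℝ E3 - 1 = 2 := by simp
      rw [hfr]
      simp only [Pi.mul_apply]
      exact lintegral_subtype_comap measurableSet_Ioi
        (fun t => ENNReal.ofReal (t ^ 2) * f (z + t • (w : E3)))
    · fun_prop
    · fun_prop
  · fun_prop

lemma lintegral_inv_sq_s14 (r t : ℝ) (hr : 0 < r) (hrt : r ≤ t) :
    ∫⁻ x in Set.Ioc r t, (ENNReal.ofReal x⁻¹) ^ (2 : ℝ) ≤ ENNReal.ofReal (1 / r) := by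
  have h0 : ∫⁻ x in Set.Ioc r t, (ENNReal.ofReal x⁻¹) ^ (2 : ℝ)
      = ∫⁻ x in Set.Ioc r t, ENNReal.ofReal (x ^ (-2 : ℝ)) := by
    refine setLIntegral_congr_fun measurableSet_Ioc fun x hx => ?_
    have hx0 : 0 < x := hr.trans hx.1
    rw [ENNReal.ofReal_rpow_of_nonneg (by positivity) (by norm_num)]
    congr 1
    rw [Real.rpow_neg hx0.le, Real.inv_rpow hx0.le]
  rw [h0]
  calc _ ≤ ∫⁻ x in Set.Ioi r, ENNReal.ofReal (x ^ (-2 : ℝ)) :=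
        lintegral_mono_set Set.Ioc_subset_Ioi_self
    _ = ENNReal.ofReal (∫ x in Set.Ioi r, x ^ (-2 : ℝ)) := by
        rw [ofReal_integral_eq_lintegral_ofReal]
        · exact integrableOn_Ioi_rpow_of_lt (by norm_num) hr
        · filter_upwards [ae_restrict_mem measurableSet_Ioi] with x hx
          exact Real.rpow_nonneg (hr.le.trans (le_of_lt hx)) _
    _ ≤ _ := by
        rw [integral_Ioi_rpow_of_lt (by norm_num) hr]
        apply ENNReal.ofReal_le_ofReal
        norm_num
        rw [Real.rpow_neg_one]

lemma radial_bound (z w : E3) (hw : ‖w‖ = 1) (u : E3 → ℝ) (hu : ContDiff ℝ 1 u) (r t : ℝ)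
    (hr : 0 < r) (hrt : r ≤ t) (h0 : u (z + r • w) = 0) :
    ‖u (z + t • w)‖ₑ ^ 2 ≤ ENNReal.ofReal (1 / r) *
      ∫⁻ x in Set.Ioc r t, ENNReal.ofReal (x ^ 2) * ‖gradient u (z + x • w)‖ₑ ^ 2 := by
  have hdiff : Differentiable ℝ u := hu.differentiable (by norm_num)
  have hcont : Continuous (fderiv ℝ u) := hu.continuous_fderiv (by norm_num)
  have hder : ∀ x : ℝ, HasDerivAt (fun x : ℝ => u (z + x • w)) (fderiv ℝ u (z + x • w) w) x := by
    intro x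
    have h1 : HasDerivAt (fun x : ℝ => z + x • w) w x := by
      simpa using ((hasDerivAt_id x).smul_const w).const_add z
    exact (hdiff _).hasFDerivAt.comp_hasDerivAt x h1
  have hc : Continuous (fun x : ℝ => fderiv ℝ u (z + x • w) w) := by fun_prop
  have hftc : ∫ x in r..t, fderiv ℝ u (z + x • w) w = u (z + t • w) - u (z + r • w) :=
    intervalIntegral.integral_eq_sub_of_hasDerivAt (fun x _ => hder x) (hc.intervalIntegrable _ _)
  rw [h0, sub_zero, intervalIntegral.integral_of_le hrt] at hftc
  have hgn : ∀ y, ‖gradient u y‖ₑ = ‖fderiv ℝ u y‖ₑ := by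
    intro y
    simp [gradient, enorm_eq_nnnorm]
  have hb : ‖u (z + t • w)‖ₑ ≤ ∫⁻ x in Set.Ioc r t, ENNReal.ofReal x⁻¹ *
      (ENNReal.ofReal x * ‖fderiv ℝ u (z + x • w)‖ₑ) := by
    rw [← hftc]
    refine (enorm_integral_le_lintegral_enorm _).trans ?_
    refine setLIntegral_mono' measurableSet_Ioc fun x hx => ?_
    have hx0 : 0 < x := hr.trans hx.1
    rw [← mul_assoc, ← ENNReal.ofReal_mul (by positivity), inv_mul_cancel₀ hx0.ne',
      ENNReal.ofReal_one, one_mul]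
    refine (ContinuousLinearMap.le_opENorm _ _).trans ?_
    have : ‖w‖ₑ = 1 := by rw [← ofReal_norm, hw, ENNReal.ofReal_one]
    rw [this, mul_one]
  have hcs := ENNReal.lintegral_mul_le_Lp_mul_Lq (volume.restrict (Set.Ioc r t))
    (Real.HolderConjugate.two_two)
    (f := fun x => ENNReal.ofReal x⁻¹)
    (g := fun x => ENNReal.ofReal x * ‖fderiv ℝ u (z + x • w)‖ₑ)
    (by fun_prop) (by fun_prop)
  have hb2 := hb.trans hcs
  calc ‖u (z + t • w)‖ₑ ^ 2 ≤ _ := pow_le_pow_left' hb2 2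
    _ ≤ _ := by
      rw [mul_pow, ← ENNReal.rpow_natCast, ← ENNReal.rpow_natCast, ← ENNReal.rpow_mul,
        ← ENNReal.rpow_mul]
      norm_num
      gcongr ?_ * ?_
      · simpa using lintegral_inv_sq_s14 r t hr hrt
      · refine setLIntegral_mono' measurableSet_Ioc fun x hx => ?_
        have hx0 : 0 < x := hr.trans hx.1
        rw [mul_pow, hgn, ENNReal.ofReal_pow hx0.le]

lemma lintegral_sq_Ioc (R : ℝ) (hR : 0 ≤ R) :
    ∫⁻ t in Set.Ioc 0 R, ENNReal.ofReal (t ^ 2) = ENNReal.ofReal (R ^ 3 / 3) := by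
  rw [← ofReal_integral_eq_lintegral_ofReal, ← intervalIntegral.integral_of_le hR]
  · simp; norm_num
  · exact (intervalIntegral.intervalIntegrable_pow 2 (μ := volume) (a := 0) (b := R)).1
  · filter_upwards with x
    positivity

lemma star_poincare (z : E3) (S : Set E3) (hS : MeasurableSet S) (R r : ℝ) (hR : 0 ≤ R)
    (hr : 0 < r) (hSR : S ⊆ Metric.closedBall z R)
    (hstar : ∀ y ∈ S, ∀ t : ℝ, 0 ≤ t → t ≤ 1 → z + t • (y - z) ∈ S)
    (u : E3 → ℝ) (hu : ContDiff ℝ 1 u) (h0 : ∀ y ∈ Metric.closedBall z r, u y = 0) :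
    ∫⁻ y in S, ‖u y‖ₑ ^ 2 ≤ ENNReal.ofReal (R ^ 3 / 3 * (1 / r)) *
      ∫⁻ y in S, ‖gradient u y‖ₑ ^ 2 := by
  have hgc : Continuous (gradient u) := by
    have : Continuous (fderiv ℝ u) := hu.continuous_fderiv (by norm_num)
    unfold gradient
    fun_prop
  have hm1 : Measurable (fun y => ‖u y‖ₑ ^ 2) := by
    have := hu.continuous
    fun_prop
  have hm2 : Measurable (fun y => ‖gradient u y‖ₑ ^ 2) := by
    have := hgc.measurable
    fun_prop
  rw [← lintegral_indicator hS, ← lintegral_indicator hS,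
    lintegral_polar z _ (hm1.indicator hS), lintegral_polar z _ (hm2.indicator hS),
    ← lintegral_const_mul' _ _ ENNReal.ofReal_ne_top]
  refine lintegral_mono fun w => ?_
  have hw : ‖(w : E3)‖ = 1 := by simpa using w.2
  set K := ∫⁻ t in Set.Ioi (0 : ℝ), ENNReal.ofReal (t ^ 2) *
    S.indicator (fun y => ‖gradient u y‖ₑ ^ 2) (z + t • (w : E3)) with hK
  have key : ∀ t ∈ Set.Ioi (0 : ℝ), ENNReal.ofReal (t ^ 2) *
      S.indicator (fun y => ‖u y‖ₑ ^ 2) (z + t • (w : E3)) ≤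
      (Set.Ioc 0 R).indicator (fun t => ENNReal.ofReal (t ^ 2)) t *
        (ENNReal.ofReal (1 / r) * K) := by
    intro t ht
    have ht0 : 0 < t := ht
    by_cases hmem : z + t • (w : E3) ∈ S
    · have htR : t ≤ R := by
        have := hSR hmem
        simpa [norm_smul, hw, abs_of_pos ht0] using this
      rw [Set.indicator_of_mem hmem, Set.indicator_of_mem (Set.mem_Ioc.2 ⟨ht0, htR⟩)]
      gcongr
      by_cases htr : t ≤ r
      · have : u (z + t • (w : E3)) = 0 := by
          apply h0
          simpa [norm_smul, hw, abs_of_pos ht0] using htr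
        simp [this]
      · push Not at htr
        refine (radial_bound z w hw u hu r t hr htr.le ?_).trans ?_
        · apply h0
          simp [norm_smul, hw, abs_of_pos hr]
        · gcongr
          rw [hK]
          refine le_trans ?_ (lintegral_mono_set (s := Set.Ioc r t)
            (fun x hx => hr.trans hx.1))
          refine setLIntegral_mono' measurableSet_Ioc fun x hx => ?_
          have hx0 : 0 < x := hr.trans hx.1
          have hxS : z + x • (w : E3) ∈ S := by
            have := hstar _ hmem (x / t) (by positivity) ((div_le_one ht0).2 hx.2)
            rwa [add_sub_cancel_left, smul_smul, div_mul_cancel₀ _ ht0.ne'] at this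
          rw [Set.indicator_of_mem hxS]
    · rw [Set.indicator_of_notMem hmem]
      simp
  calc _ ≤ ∫⁻ t in Set.Ioi (0 : ℝ), (Set.Ioc 0 R).indicator (fun t => ENNReal.ofReal (t ^ 2)) t *
        (ENNReal.ofReal (1 / r) * K) := setLIntegral_mono' measurableSet_Ioi key
    _ = ENNReal.ofReal (R ^ 3 / 3) * (ENNReal.ofReal (1 / r) * K) := by
        rw [lintegral_mul_const, lintegral_indicator measurableSet_Ioc,
          Measure.restrict_restrict measurableSet_Ioc,
          Set.inter_eq_left.2 Set.Ioc_subset_Ioi_self, lintegral_sq_Ioc R hR]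
        exact Measurable.indicator (by fun_prop) measurableSet_Ioc
    _ = _ := by rw [← mul_assoc, ← ENNReal.ofReal_mul (by positivity)]

/-- The lattice point of `(dℤ)³` with integer coordinates `k`. -/
noncomputable def latPt (d : ℝ) (k : Fin 3 → ℤ) : E3 := WithLp.toLp 2 fun i => (k i : ℝ) * d

/-- The part of the annulus near `z` which is visible from `z`. -/
def visSet (s R : ℝ) (z : E3) : Set E3 :=
  {_y | ‖z‖ < s + 1} ∩ Metric.ball 0 (s + 1) ∩
    (⋂ t ∈ Set.Icc (0 : ℝ) 1, {y | s ≤ ‖z + t • (y - z)‖}) ∩ Metric.closedBall z R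

lemma mem_visSet {s R : ℝ} {z y : E3} : y ∈ visSet s R z ↔
    ‖z‖ < s + 1 ∧ ‖y‖ < s + 1 ∧ (∀ t : ℝ, 0 ≤ t → t ≤ 1 → s ≤ ‖z + t • (y - z)‖) ∧
      ‖y - z‖ ≤ R := by
  simp [visSet, dist_eq_norm, and_assoc]

lemma visSet_measurable (s R : ℝ) (z : E3) : MeasurableSet (visSet s R z) := by
  refine MeasurableSet.inter (MeasurableSet.inter (MeasurableSet.inter (MeasurableSet.const _)
    measurableSet_ball) ?_) measurableSet_closedBall
  refine IsClosed.measurableSet ?_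
  refine isClosed_biInter fun t _ => ?_
  exact isClosed_le continuous_const (by fun_prop)

lemma visSet_sub (s R : ℝ) (z : E3) : visSet s R z ⊆ Metric.ball 0 (s + 1) \ Metric.ball 0 s := by
  intro y hy
  rw [mem_visSet] at hy
  have := hy.2.2.1 1 (by norm_num) le_rfl
  simp only [one_smul, add_sub_cancel] at this
  simp [hy.2.1, this]

lemma visSet_star (s R : ℝ) (z : E3) : ∀ y ∈ visSet s R z, ∀ t : ℝ, 0 ≤ t → t ≤ 1 →
    z + t • (y - z) ∈ visSet s R z := by
  intro y hy t ht0 ht1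
  rw [mem_visSet] at hy ⊢
  obtain ⟨h1, h2, h3, h4⟩ := hy
  refine ⟨h1, ?_, ?_, ?_⟩
  · have := (convex_ball (0 : E3) (s + 1)).add_smul_sub_mem (x := z) (y := y) (by simpa using h1)
      (by simpa using h2) ⟨ht0, ht1⟩
    simpa using this
  · intro t' h0 h1'
    have := h3 (t' * t) (by positivity) (mul_le_one₀ h1' ht0 ht1)
    rwa [add_sub_cancel_left, smul_smul]
  · rw [add_sub_cancel_left, norm_smul, Real.norm_of_nonneg ht0]
    exact (mul_le_of_le_one_left (norm_nonneg _) ht1).trans h4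

lemma exists_latPt (d : ℝ) (hd : 0 < d) (w : E3) :
    ∃ k, ‖latPt d k - w‖ ≤ Real.sqrt 3 / 2 * d := by
  refine ⟨fun i => round (w i / d), ?_⟩
  rw [EuclideanSpace.norm_eq]
  apply Real.sqrt_le_iff.2
  refine ⟨by positivity, ?_⟩
  have h : ∀ i, ‖(latPt d (fun i => round (w i / d)) - w) i‖ ^ 2 ≤ (d / 2) ^ 2 := by
    intro i
    gcongr
    have h1 := abs_sub_round (w i / d)
    have h2 : (latPt d (fun i => round (w i / d)) - w) i
        = - ((w i / d - round (w i / d)) * d) := by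
      simp only [latPt, PiLp.sub_apply]
      field_simp
      ring
    rw [h2, norm_neg, norm_mul, Real.norm_eq_abs, Real.norm_of_nonneg hd.le]
    nlinarith
  calc _ ≤ ∑ i : Fin 3, (d / 2) ^ 2 := Finset.sum_le_sum fun i _ => h i
    _ = _ := by
      have : Real.sqrt 3 ^ 2 = 3 := Real.sq_sqrt (by norm_num)
      simp [mul_pow, div_pow, this]
      ring

lemma cover (d s : ℝ) (hd : 0 < d) (hd2 : Real.sqrt 3 * d < 1 / 2) (hs : 1 ≤ s) (y : E3)
    (hy : y ∈ Metric.ball (0 : E3) (s + 1) \ Metric.ball 0 s) :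
    ∃ k, y ∈ visSet s (2 * d) (latPt d k) := by
  have hy1 : ‖y‖ < s + 1 := by simpa using hy.1
  have hy2 : s ≤ ‖y‖ := by simpa using hy.2
  have h3 : Real.sqrt 3 ≤ 2 := by
    rw [Real.sqrt_le_iff]; norm_num
  set h := Real.sqrt 3 / 2 * d with hh
  have hpos : 0 < h := by positivity
  have hh4 : h < 1 / 4 := by rw [hh]; linarith
  have hhd : h ≤ d := by rw [hh]; nlinarith
  have hyp : 0 < ‖y‖ := by linarith
  -- the unit vector
  set e : E3 := ‖y‖⁻¹ • y with he
  have hen : ‖e‖ = 1 := by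
    rw [he, norm_smul, norm_inv, norm_norm, inv_mul_cancel₀ hyp.ne']
  have hye : y = ‖y‖ • e := by
    rw [he, smul_smul, mul_inv_cancel₀ hyp.ne', one_smul]
  have hee : inner ℝ e e = (1 : ℝ) := by rw [real_inner_self_eq_norm_sq, hen]; norm_num
  have hyin : inner ℝ e y = ‖y‖ := by
    conv_lhs => rw [hye]
    rw [inner_smul_right, hee, mul_one]
  -- reduction
  have main : ∀ (c : ℝ) (z : E3), |c| ≤ h → ‖z - (y + c • e)‖ ≤ h → s ≤ ‖y‖ + c - h →
      ‖z‖ < s + 1 → y ∈ visSet s (2 * d) z := by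
    intro c z hc hz h1 h2
    rw [mem_visSet]
    have hze : s ≤ inner ℝ e z := by
      have e1 : inner ℝ e z = ‖y‖ + c + inner ℝ e (z - (y + c • e)) := by
        rw [inner_sub_right, inner_add_right, inner_smul_right, hee, hyin]; ring
      have e2 := abs_real_inner_le_norm e (z - (y + c • e))
      rw [hen, one_mul] at e2
      have e3 := (abs_le.1 (e2.trans hz)).1
      linarith
    refine ⟨h2, hy1, ?_, ?_⟩
    · intro t ht0 ht1
      have e1 : inner ℝ e (z + t • (y - z)) = (1 - t) * inner ℝ e z + t * ‖y‖ := by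
        rw [inner_add_right, inner_smul_right, inner_sub_right, hyin]; ring
      have e2 := real_inner_le_norm e (z + t • (y - z))
      rw [hen, one_mul] at e2
      nlinarith
    · have e1 : y - z = -((z - (y + c • e)) + c • e) := by abel
      rw [e1, norm_neg]
      refine (norm_add_le _ _).trans ?_
      rw [norm_smul, hen, mul_one, Real.norm_eq_abs]
      linarith
  have hnorm : ∀ c : ℝ, 0 ≤ ‖y‖ + c → ‖y + c • e‖ = ‖y‖ + c := by
    intro c hc
    have : y + c • e = (‖y‖ + c) • e := by
      rw [add_smul, ← hye]
    rw [this, norm_smul, hen, mul_one, Real.norm_of_nonneg hc]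
  have hz' : ∀ (c : ℝ) (z : E3), 0 ≤ ‖y‖ + c → ‖z - (y + c • e)‖ ≤ h → ‖z‖ ≤ ‖y‖ + c + h := by
    intro c z hc hz
    have e1 : z = (y + c • e) + (z - (y + c • e)) := by abel
    rw [e1]
    refine (norm_add_le _ _).trans ?_
    rw [hnorm c hc]
    linarith
  by_cases hcase : ‖y‖ ≤ s + 1 / 2
  · obtain ⟨k, hk⟩ := exists_latPt d hd (y + h • e)
    refine ⟨k, main h _ (abs_of_pos hpos).le hk (by linarith) ?_⟩
    have := hz' h _ (by linarith) hk
    linarith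
  · push Not at hcase
    obtain ⟨k, hk⟩ := exists_latPt d hd (y + (-h) • e)
    refine ⟨k, main (-h) _ (by rw [abs_neg, abs_of_pos hpos]) hk (by linarith) ?_⟩
    have := hz' (-h) _ (by linarith) hk
    linarith

lemma overlap (d s : ℝ) (hd : 0 < d) (g : ℝ≥0∞) (y : E3) :
    ∑' k, (visSet s (2 * d) (latPt d k)).indicator (fun _ => g) y ≤ 216 * g := by
  classical
  set F : Finset (Fin 3 → ℤ) := Fintype.piFinset fun i =>
    Finset.Icc (⌊y i / d⌋ - 2) (⌊y i / d⌋ + 3) with hF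
  have hcard : F.card = 216 := by
    rw [hF, Fintype.card_piFinset]
    have : ∀ a : ℤ, (a + 3 + 1 - (a - 2)).toNat = 6 := by intro a; omega
    simp [this]
  rw [tsum_eq_sum (s := F)]
  · calc _ ≤ ∑ k ∈ F, g := Finset.sum_le_sum fun k _ => Set.indicator_le_self' (by simp) _
      _ = 216 * g := by simp [hcard]
  · intro k hk
    apply Set.indicator_of_notMem
    intro hy
    apply hk
    rw [mem_visSet] at hy
    rw [hF, Fintype.mem_piFinset]
    intro i
    have h1 : |y i - k i * d| ≤ 2 * d := by
      have := (PiLp.norm_apply_le (y - latPt d k) i).trans hy.2.2.2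
      simpa [latPt] using this
    rw [abs_le] at h1
    have h2 : y i / d - k i ≤ 2 := by
      rw [div_sub' hd.ne', div_le_iff₀ hd]; linarith
    have h3 : -2 ≤ y i / d - k i := by
      rw [div_sub' hd.ne', le_div_iff₀ hd]; linarith
    have h4 := Int.floor_le (y i / d)
    have h5 := Int.lt_floor_add_one (y i / d)
    rw [Finset.mem_Icc]
    constructor
    · have : ((⌊y i / d⌋ : ℤ) : ℝ) - 2 ≤ k i := by linarith
      exact_mod_cast this
    · have : (k i : ℝ) ≤ ((⌊y i / d⌋ : ℤ) : ℝ) + 3 := by linarith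
      exact_mod_cast this


/-- **Poincaré inequality on annuli for perforated domains.**
There is a universal constant `C > 0` such that for `0 < d < 1/(2√3)`, `0 < r < d/2` and
`s ≥ 1`, every `C¹` function `u : ℝ³ → ℝ` vanishing on the perforated set
`K_r = ⋃_{x ∈ (dℤ)³} cl(B_r(x))` satisfies
`∫_{B_{s+1}(0) \ B_s(0)} u² ≤ C (d³/r) ∫_{B_{s+1}(0) \ B_s(0)} |∇u|²`. -/
theorem poincare_annulus_perforated_domain :
    ∃ C : ℝ, 0 < C ∧
      ∀ d r : ℝ, 0 < d → d < 1 / (2 * Real.sqrt 3) → 0 < r → r < d / 2 →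
        ∀ s : ℝ, 1 ≤ s →
          ∀ u : EuclideanSpace ℝ (Fin 3) → ℝ,
            ContDiff ℝ 1 u →
            (∀ y ∈ latticePerforation d r, u y = 0) →
            ∫⁻ y in Metric.ball (0 : EuclideanSpace ℝ (Fin 3)) (s + 1) \ Metric.ball 0 s,
                (‖u y‖₊ : ℝ≥0∞) ^ 2
              ≤ ENNReal.ofReal (C * (d ^ 3 / r)) *
                  ∫⁻ y in Metric.ball (0 : EuclideanSpace ℝ (Fin 3)) (s + 1) \
                      Metric.ball 0 s,
                    (‖gradient u y‖₊ : ℝ≥0∞) ^ 2 := by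
  refine ⟨576, by norm_num, ?_⟩
  intro d r hd hd1 hr hrd s hs u hu h0
  have h3 : 0 < Real.sqrt 3 := by positivity
  have hd2 : Real.sqrt 3 * d < 1 / 2 := by
    rw [lt_div_iff₀ (by positivity)] at hd1
    linarith
  simp only [← enorm_eq_nnnorm]
  set A := Metric.ball (0 : EuclideanSpace ℝ (Fin 3)) (s + 1) \ Metric.ball 0 s with hA
  have hAm : MeasurableSet A := measurableSet_ball.diff measurableSet_ball
  have hgc : Continuous (gradient u) := by
    have : Continuous (fderiv ℝ u) := hu.continuous_fderiv (by norm_num)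
    unfold gradient
    fun_prop
  have hm2 : Measurable (fun y => ‖gradient u y‖ₑ ^ 2) := by
    have := hgc.measurable
    fun_prop
  have hsub : A ⊆ ⋃ k, visSet s (2 * d) (latPt d k) := by
    intro y hy
    exact Set.mem_iUnion.2 (cover d s hd hd2 hs y hy)
  have hvan : ∀ k, ∀ y ∈ Metric.closedBall (latPt d k) r, u y = 0 := by
    intro k y hy
    apply h0
    simp only [latticePerforation, Set.mem_iUnion]
    exact ⟨latPt d k, fun i => ⟨k i, rfl⟩, hy⟩
  set c := ENNReal.ofReal ((2 * d) ^ 3 / 3 * (1 / r)) with hc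
  calc ∫⁻ y in A, ‖u y‖ₑ ^ 2
      ≤ ∫⁻ y in ⋃ k, visSet s (2 * d) (latPt d k), ‖u y‖ₑ ^ 2 := lintegral_mono_set hsub
    _ ≤ ∑' k, ∫⁻ y in visSet s (2 * d) (latPt d k), ‖u y‖ₑ ^ 2 := lintegral_iUnion_le _ _
    _ ≤ ∑' k, c * ∫⁻ y in visSet s (2 * d) (latPt d k), ‖gradient u y‖ₑ ^ 2 := by
        refine ENNReal.tsum_le_tsum fun k => ?_
        exact star_poincare _ _ (visSet_measurable _ _ _) (2 * d) r (by positivity) hr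
          Set.inter_subset_right (visSet_star _ _ _) u hu (hvan k)
    _ = c * ∑' k, ∫⁻ y in A, (visSet s (2 * d) (latPt d k)).indicator
          (fun y => ‖gradient u y‖ₑ ^ 2) y := by
        rw [ENNReal.tsum_mul_left]
        congr 1
        refine tsum_congr fun k => ?_
        rw [lintegral_indicator (visSet_measurable _ _ _),
          Measure.restrict_restrict (visSet_measurable _ _ _),
          Set.inter_eq_left.2 (visSet_sub _ _ _)]
    _ = c * ∫⁻ y in A, ∑' k, (visSet s (2 * d) (latPt d k)).indicator
          (fun y => ‖gradient u y‖ₑ ^ 2) y := by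
        rw [lintegral_tsum]
        exact fun k => (hm2.indicator (visSet_measurable _ _ _)).aemeasurable
    _ ≤ c * ∫⁻ y in A, 216 * ‖gradient u y‖ₑ ^ 2 := by
        gcongr with y
        exact overlap d s hd (‖gradient u y‖ₑ ^ 2) y
    _ = ENNReal.ofReal (576 * (d ^ 3 / r)) * ∫⁻ y in A, ‖gradient u y‖ₑ ^ 2 := by
        rw [lintegral_const_mul _ hm2, ← mul_assoc]
        congr 1
        have : (216 : ℝ≥0∞) = ENNReal.ofReal 216 := by norm_num
        rw [hc, this, ← ENNReal.ofReal_mul (by positivity)]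
        congr 1
        field_simp
        norm_num
end

section
/- There exists a constant C > 0 such that for every z ∈ ℝ³ with z ≠ 0, ∫_{ℝ³} ( e^{−|y|/2} / |y|² ) · ( e^{−|y−z|/2} / |y−z|² ) dy ≤ C · e^{−|z|/4} / |z|². -/
open MeasureTheory
open scoped ENNReal

lemma yk_integrable : Integrable
    (fun y : EuclideanSpace ℝ (Fin 3) => Real.exp (-‖y‖ / 4) / ‖y‖ ^ 2) := by
  refine (integrable_fun_norm_addHaar (E := EuclideanSpace ℝ (Fin 3)) volume
    (f := fun t : ℝ => Real.exp (-t / 4) / t ^ 2)).2 ?_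
  have h := exp_neg_integrableOn_Ioi 0 (b := (1/4 : ℝ)) (by norm_num)
  refine h.congr_fun (fun t ht => ?_) measurableSet_Ioi
  have ht' : (t : ℝ) ≠ 0 := (Set.mem_Ioi.1 ht).ne'
  simp only [finrank_euclideanSpace, Fintype.card_fin, smul_eq_mul]
  rw [show -t / 4 = -(1/4) * t by ring]
  field_simp

lemma yk_pointwise (a b r : ℝ) (ha : 0 ≤ a) (hb : 0 ≤ b) (hr : 0 < r) (h : r ≤ a + b) :
    Real.exp (-a / 2) / a ^ 2 * (Real.exp (-b / 2) / b ^ 2) ≤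
      4 * Real.exp (-r / 4) / r ^ 2 *
        (Real.exp (-a / 4) / a ^ 2 + Real.exp (-b / 4) / b ^ 2) := by
  have key : ∀ a b : ℝ, 0 ≤ a → 0 ≤ b → r ≤ a + b → b ≤ a →
      Real.exp (-a / 2) / a ^ 2 * (Real.exp (-b / 2) / b ^ 2) ≤
      4 * Real.exp (-r / 4) / r ^ 2 * (Real.exp (-b / 4) / b ^ 2) := by
    intro a b ha hb h hab
    have e : Real.exp (-a / 2) * Real.exp (-b / 2) ≤
        Real.exp (-r / 4) * Real.exp (-b / 4) := by
      rw [← Real.exp_add, ← Real.exp_add]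
      exact Real.exp_le_exp.2 (by linarith)
    have i : 1 / a ^ 2 ≤ 4 / r ^ 2 := by
      rw [div_le_div_iff₀ (by nlinarith) (by positivity)]
      nlinarith
    calc _ = (Real.exp (-a / 2) * Real.exp (-b / 2)) * (1 / a ^ 2) * (1 / b ^ 2) := by ring
      _ ≤ (Real.exp (-r / 4) * Real.exp (-b / 4)) * (4 / r ^ 2) * (1 / b ^ 2) := by gcongr
      _ = _ := by ring
  have p : ∀ t : ℝ, 0 ≤ 4 * Real.exp (-r / 4) / r ^ 2 * (Real.exp (-t / 4) / t ^ 2) :=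
    fun t => by positivity
  rw [mul_add]
  rcases le_total b a with hab | hab
  · linarith [key a b ha hb h hab, p a]
  · have := key b a hb ha (by linarith) hab
    rw [mul_comm] at this
    linarith [p b]

/-- **Convolution estimate for Yukawa-type kernels.**
There is a constant `C > 0` such that for every nonzero `z ∈ ℝ³`,
`∫_{ℝ³} (e^{−|y|/2}/|y|²) (e^{−|y−z|/2}/|y−z|²) dy ≤ C e^{−|z|/4}/|z|²`. -/
theorem yukawa_kernel_convolution_estimate :
    ∃ C : ℝ, 0 < C ∧
      ∀ z : EuclideanSpace ℝ (Fin 3), z ≠ 0 →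
        ∫⁻ y, ENNReal.ofReal
            (Real.exp (-‖y‖ / 2) / ‖y‖ ^ 2 * (Real.exp (-‖y - z‖ / 2) / ‖y - z‖ ^ 2))
          ≤ ENNReal.ofReal (C * Real.exp (-‖z‖ / 4) / ‖z‖ ^ 2) := by
  set k : EuclideanSpace ℝ (Fin 3) → ℝ := fun y => Real.exp (-‖y‖ / 4) / ‖y‖ ^ 2 with hk
  have hki : Integrable k := yk_integrable
  have hk0 : ∀ y, 0 ≤ k y := fun y => by positivity
  have hK : 0 ≤ ∫ y, k y := integral_nonneg hk0
  refine ⟨8 * (∫ y, k y) + 1, by positivity, fun z hz => ?_⟩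
  have hr : 0 < ‖z‖ := norm_pos_iff.2 hz
  have hkz : Integrable (fun y => k (y - z)) := hki.comp_sub_right z
  calc _ ≤ ∫⁻ y, ENNReal.ofReal
        (4 * Real.exp (-‖z‖ / 4) / ‖z‖ ^ 2 * (k y + k (y - z))) := by
        refine lintegral_mono fun y => ENNReal.ofReal_le_ofReal ?_
        refine yk_pointwise _ _ _ (norm_nonneg _) (norm_nonneg _) hr ?_
        have := norm_sub_le y (y - z)
        rwa [sub_sub_cancel] at this
    _ = ENNReal.ofReal (∫ y, 4 * Real.exp (-‖z‖ / 4) / ‖z‖ ^ 2 * (k y + k (y - z))) := by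
        refine (ofReal_integral_eq_lintegral_ofReal ((hki.add hkz).const_mul _) ?_).symm
        exact Filter.Eventually.of_forall fun y =>
          mul_nonneg (by positivity) (add_nonneg (hk0 _) (hk0 _))
    _ ≤ _ := by
        apply ENNReal.ofReal_le_ofReal
        rw [integral_const_mul, integral_add hki hkz, integral_sub_right_eq_self k z]
        have : 0 ≤ Real.exp (-‖z‖ / 4) / ‖z‖ ^ 2 := by positivity
        rw [mul_div_assoc, mul_div_assoc]
        nlinarith
end

section
/- Let H be a real Hilbert space and let S : H → H be a bounded self-adjoint linear operator satisfying 0 ≤ ⟨S x, x⟩ ≤ ‖x‖² for all x ∈ H. Then for every u ∈ H and every M ∈ ℕ, ⟨S (I − S)^M u, (I − S)^M u⟩ ≤ ‖u‖² / (M + 1). -/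
open scoped RealInnerProductSpace

/-- **Decay of the quadratic form along the iteration.**
If `S` is bounded, self-adjoint and `0 ≤ ⟨S x, x⟩ ≤ ‖x‖²` for all `x`, then for every
`u` and `M`, `⟨S (I − S)^M u, (I − S)^M u⟩ ≤ ‖u‖²/(M+1)`. -/
theorem quadratic_form_decay_along_iteration
    {H : Type*} [NormedAddCommGroup H] [InnerProductSpace ℝ H] [CompleteSpace H]
    (S : H →L[ℝ] H)
    (hsa : ∀ x y : H, ⟪S x, y⟫ = ⟪x, S y⟫)
    (hpos : ∀ x : H, 0 ≤ ⟪S x, x⟫)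
    (hle : ∀ x : H, ⟪S x, x⟫ ≤ ‖x‖ ^ 2)
    (u : H) (M : ℕ) :
    ⟪S (((1 - S) ^ M) u), ((1 - S) ^ M) u⟫ ≤ ‖u‖ ^ 2 / (M + 1) := by
  have exp1 : ∀ v : H, ⟪S (v - S v), v - S v⟫ = ⟪S v, v⟫ - 2 * ‖S v‖ ^ 2 + ⟪S (S v), S v⟫ := by
    intro v
    have h1 : ⟪S (S v), v⟫ = ‖S v‖ ^ 2 := by rw [hsa, real_inner_self_eq_norm_sq]
    rw [map_sub, inner_sub_left, inner_sub_right, inner_sub_right, h1,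
      real_inner_self_eq_norm_sq]
    ring
  have key : ∀ v : H, ‖S v‖ ^ 2 ≤ ⟪S v, v⟫ := by
    intro v
    have h1 := hpos (v - S v)
    have h2 := hle (S v)
    rw [exp1] at h1
    linarith
  have hnorm : ∀ v : H, ‖v - S v‖ ^ 2 = ‖v‖ ^ 2 - 2 * ⟪S v, v⟫ + ‖S v‖ ^ 2 := by
    intro v
    rw [norm_sub_sq_real, real_inner_comm]
  have inv : ∀ n : ℕ, (n : ℝ) * ⟪S (((1 - S) ^ n) u), ((1 - S) ^ n) u⟫
      + ‖((1 - S) ^ n) u‖ ^ 2 ≤ ‖u‖ ^ 2 := by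
    intro n
    induction n with
    | zero => simp
    | succ n ih =>
      have hs : ((1 - S) ^ (n + 1)) u = ((1 - S) ^ n) u - S (((1 - S) ^ n) u) := by
        rw [pow_succ']
        rfl
      rw [hs]
      generalize ((1 - S) ^ n) u = v at ih ⊢
      have h1 := key v
      have h2 := hle (S v)
      have h3 : ⟪S (v - S v), v - S v⟫ ≤ ⟪S v, v⟫ := by
        rw [exp1]
        nlinarith [sq_nonneg ‖S v‖]
      have h4 := mul_le_mul_of_nonneg_left h3 (by positivity : (0 : ℝ) ≤ (n : ℝ) + 1)
      rw [hnorm]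
      push_cast
      linarith
  rw [le_div_iff₀ (by positivity)]
  have h1 := inv M
  have h2 := hle (((1 - S) ^ M) u)
  linarith
end
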